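/- Let P = c_P z₁^{α₁}z₂^{α₂}z₃^{α₃}, Q = c_Q z₁^{β₁}z₂^{β₂}z₃^{β₃}, R = c_R z₁^{γ₁}z₂^{γ₂}z₃^{γ₃} be monomials with nonzero coefficients c_P, c_Q, c_R ∈ ℂ, with deg P + deg Q = 2·deg R, deg R ≥ 2, and det[[α₁,β₁,γ₁],[α₂,β₂,γ₂],[α₃,β₃,γ₃]] ≠ 0 (holomorphic nondegeneracy). If dim_ℝ g_c > 0, then 7 ≤ dim_ℝ g ≤ 13. Furthermore, there exists such a choice of monomials P, Q, R (with nonzero coefficients, deg P + deg Q = 2·deg R, deg R ≥ 2 and nonzero exponent determinant) for which dim_ℝ g_c > 0 and dim_ℝ g = 13. -/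

import Mathlib

open MvPolynomial Complex

noncomputable section

/-- `Φ(z) = P(z)·conj(Q(z)) + Q(z)·conj(P(z)) + R(z)·conj(R(z))`, so that the model
hypersurface is `M = {(z,w) : Im w = Φ(z)}`. -/
def Phi (P Q R : MvPolynomial (Fin 3) ℂ) (z : Fin 3 → ℂ) : ℂ :=
  eval z P * (starRingEnd ℂ) (eval z Q) + eval z Q * (starRingEnd ℂ) (eval z P) +
    eval z R * (starRingEnd ℂ) (eval z R)

/-- `Φ_j(z) = (∂P/∂z_j)(z)·conj(Q(z)) + (∂Q/∂z_j)(z)·conj(P(z)) + (∂R/∂z_j)(z)·conj(R(z))`. -/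
def PhiD (P Q R : MvPolynomial (Fin 3) ℂ) (j : Fin 3) (z : Fin 3 → ℂ) : ℂ :=
  eval z (pderiv j P) * (starRingEnd ℂ) (eval z Q) +
    eval z (pderiv j Q) * (starRingEnd ℂ) (eval z P) +
    eval z (pderiv j R) * (starRingEnd ℂ) (eval z R)

/-- The monomial `c·z₁^{e₁} z₂^{e₂} z₃^{e₃}`. -/
def mon (c : ℂ) (e : Fin 3 → ℕ) : MvPolynomial (Fin 3) ℂ :=
  C c * X 0 ^ e 0 * X 1 ^ e 1 * X 2 ^ e 2

/-- Total degree of the exponent vector `e`. -/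
def degE (e : Fin 3 → ℕ) : ℕ := e 0 + e 1 + e 2

/-- The determinant of the 3×3 matrix whose columns are the exponent vectors
`a`, `b`, `g` of the three monomials. -/
def edet (a b g : Fin 3 → ℕ) : ℤ :=
  Matrix.det !![(a 0 : ℤ), (b 0 : ℤ), (g 0 : ℤ);
                (a 1 : ℤ), (b 1 : ℤ), (g 1 : ℤ);
                (a 2 : ℤ), (b 2 : ℤ), (g 2 : ℤ)]

/-- The polynomial vector field `Σ F_j ∂/∂z_j + G ∂/∂w` is an infinitesimal CR
automorphism of `M = {Im w = Φ(z)}`. -/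
def IsInfCR (P Q R : MvPolynomial (Fin 3) ℂ)
    (F : Fin 3 → MvPolynomial (Fin 4) ℂ) (G : MvPolynomial (Fin 4) ℂ) : Prop :=
  ∀ (z : Fin 3 → ℂ) (u : ℝ),
    (eval (Fin.snoc z ((u : ℂ) + Complex.I * Phi P Q R z)) G / (2 * Complex.I) -
      ∑ j, eval (Fin.snoc z ((u : ℂ) + Complex.I * Phi P Q R z)) (F j) * PhiD P Q R j z).re = 0

/-- `g_c`: rigid infinitesimal CR automorphisms `Σ f_j(z) ∂/∂z_j` of `M` all of
whose monomials have total degree at least `2` and at most `d`. -/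
def gcSet (P Q R : MvPolynomial (Fin 3) ℂ) (d : ℕ) : Set (Fin 3 → MvPolynomial (Fin 3) ℂ) :=
  {f | (∀ j, ∀ m ∈ (f j).support, 2 ≤ (m.sum fun _ e => e) ∧ (m.sum fun _ e => e) ≤ d) ∧
       ∀ z : Fin 3 → ℂ, (∑ j, eval z (f j) * PhiD P Q R j z).re = 0}

/-- `g`: the real vector space (here, the set) of all polynomial infinitesimal CR
automorphisms of `M`. -/
def gSet (P Q R : MvPolynomial (Fin 3) ℂ) :
    Set ((Fin 3 → MvPolynomial (Fin 4) ℂ) × MvPolynomial (Fin 4) ℂ) :=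
  {Xf | IsInfCR P Q R Xf.1 Xf.2}

/-! ### Polynomial functions -/

/-- A function of finitely many complex variables given by a polynomial. -/
def IsPolyFun {σ : Type*} (f : (σ → ℂ) → ℂ) : Prop :=
  ∃ p : MvPolynomial σ ℂ, ∀ v, f v = eval v p

namespace IsPolyFun

variable {σ : Type*} {f g : (σ → ℂ) → ℂ}

theorem const (c : ℂ) : IsPolyFun (fun _ : σ → ℂ => c) := ⟨C c, by simp⟩

theorem coord (i : σ) : IsPolyFun (fun v : σ → ℂ => v i) := ⟨X i, by simp⟩

theorem add (hf : IsPolyFun f) (hg : IsPolyFun g) : IsPolyFun (fun v => f v + g v) := by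
  obtain ⟨p, hp⟩ := hf
  obtain ⟨q, hq⟩ := hg
  exact ⟨p + q, fun v => by simp [hp, hq]⟩

theorem mul (hf : IsPolyFun f) (hg : IsPolyFun g) : IsPolyFun (fun v => f v * g v) := by
  obtain ⟨p, hp⟩ := hf
  obtain ⟨q, hq⟩ := hg
  exact ⟨p * q, fun v => by simp [hp, hq]⟩

theorem sub (hf : IsPolyFun f) (hg : IsPolyFun g) : IsPolyFun (fun v => f v - g v) := by
  obtain ⟨p, hp⟩ := hf
  obtain ⟨q, hq⟩ := hg
  exact ⟨p - q, fun v => by simp [hp, hq]⟩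

theorem sum {ι : Type*} {s : Finset ι} {f : ι → (σ → ℂ) → ℂ} (hf : ∀ i, IsPolyFun (f i)) :
    IsPolyFun (fun v => ∑ i ∈ s, f i v) := by
  choose p hp using hf
  exact ⟨∑ i ∈ s, p i, fun v => by simp [hp]⟩

theorem comp {ι : Type*} {c : (σ → ℂ) → ι → ℂ} (hc : ∀ i, IsPolyFun (fun v => c v i))
    (F : MvPolynomial ι ℂ) : IsPolyFun (fun v => eval (c v) F) := by
  choose p hp using hc
  refine ⟨bind₁ p F, fun v => ?_⟩
  have : c v = fun i => eval v (p i) := funext fun i => hp i v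
  change eval (c v) F = eval v (bind₁ p F)
  rw [this, eval, eval, eval₂Hom_bind₁]

theorem comp_snoc {n : ℕ} {c : (σ → ℂ) → Fin n → ℂ} {d : (σ → ℂ) → ℂ}
    (hc : ∀ i, IsPolyFun (fun v => c v i)) (hd : IsPolyFun d) (F : MvPolynomial (Fin (n + 1)) ℂ) :
    IsPolyFun (fun v => eval (Fin.snoc (c v) (d v) : Fin (n + 1) → ℂ) F) := by
  refine comp (fun i => ?_) F
  induction i using Fin.lastCases with
  | last => simpa using hd
  | cast i => simpa using hc i

/-- A polynomial function that vanishes at all real points vanishes identically. -/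
theorem eq_zero_of_real (hf : IsPolyFun f) (h : ∀ v : σ → ℝ, f (fun i => (v i : ℂ)) = 0)
    (v : σ → ℂ) : f v = 0 := by
  obtain ⟨p, hp⟩ := hf
  have : p = 0 := by
    refine funext_set (fun _ => Set.range ((↑) : ℝ → ℂ))
      (fun _ => Set.infinite_range_of_injective Complex.ofReal_injective) fun x hx => ?_
    choose y hy using fun i => hx i (Set.mem_univ i)
    have hx' : x = fun i => (y i : ℂ) := funext fun i => (hy i).symm
    rw [hx', ← hp, h, map_zero]
  rw [hp, this, map_zero]

end IsPolyFun

theorem conj_eval {σ : Type*} (v : σ → ℂ) (F : MvPolynomial σ ℂ) :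
    (starRingEnd ℂ) (eval v F) =
      eval (fun i => (starRingEnd ℂ) (v i)) (map (starRingEnd ℂ) F) := by
  rw [eval_map, eval, coe_eval₂Hom, eval₂_comp_left (starRingEnd ℂ)]
  rfl

theorem conj_eval_snoc {n : ℕ} (z : Fin n → ℂ) (w : ℂ) (F : MvPolynomial (Fin (n + 1)) ℂ) :
    (starRingEnd ℂ) (eval (Fin.snoc z w : Fin (n + 1) → ℂ) F) =
      eval (Fin.snoc (fun i => (starRingEnd ℂ) (z i)) ((starRingEnd ℂ) w) : Fin (n + 1) → ℂ)
        (map (starRingEnd ℂ) F) := by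
  rw [conj_eval]
  congr 1
  refine congrArg eval (funext fun i => ?_)
  induction i using Fin.lastCases <;> simp

/-! ### Polarization -/

/-- The involution of `Fin 3` exchanging the roles of `P` and `Q`. -/
def sw : Fin 3 → Fin 3 := ![1, 0, 2]

/-- The polarization of `IsInfCR`: the variables `z` and `conj z` become independent. -/
theorem IsInfCR.polarize {x : Fin 3 → MvPolynomial (Fin 3) ℂ} {F : Fin 3 → MvPolynomial (Fin 4) ℂ}
    {G : MvPolynomial (Fin 4) ℂ} (h : IsInfCR (x 0) (x 1) (x 2) F G) (z z' : Fin 3 → ℂ) (w w' : ℂ)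
    (hw : w - (starRingEnd ℂ) w' =
      2 * I * ∑ i, eval z (x i) * (starRingEnd ℂ) (eval z' (x (sw i)))) :
    eval (Fin.snoc z w : Fin 4 → ℂ) G - (starRingEnd ℂ) (eval (Fin.snoc z' w' : Fin 4 → ℂ) G) =
      2 * I * ((∑ i, (∑ j, eval (Fin.snoc z w : Fin 4 → ℂ) (F j) * eval z (pderiv j (x i))) *
          (starRingEnd ℂ) (eval z' (x (sw i)))) +
        ∑ i, (starRingEnd ℂ) (∑ j, eval (Fin.snoc z' w' : Fin 4 → ℂ) (F j) *
          eval z' (pderiv j (x i))) * eval z (x (sw i))) := by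
  let mp := MvPolynomial.map (σ := Fin 3) (starRingEnd ℂ)
  let mp' := MvPolynomial.map (σ := Fin 4) (starRingEnd ℂ)
  let V := Fin 3 ⊕ Fin 3 ⊕ Unit → ℂ
  let Z : V → Fin 3 → ℂ := fun v i => v (.inl i) + I * v (.inr (.inl i))
  let Y : V → Fin 3 → ℂ := fun v i => v (.inl i) - I * v (.inr (.inl i))
  let Ph : V → ℂ := fun v => ∑ i, eval (Z v) (x i) * eval (Y v) (mp (x (sw i)))
  let W : V → Fin 4 → ℂ := fun v => Fin.snoc (Z v) (v (.inr (.inr ())) + I * Ph v)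
  let T : V → Fin 4 → ℂ := fun v => Fin.snoc (Y v) (v (.inr (.inr ())) - I * Ph v)
  let f : V → ℂ := fun v =>
    eval (W v) G - eval (T v) (mp' G) -
      2 * I * ((∑ i, (∑ j, eval (W v) (F j) * eval (Z v) (pderiv j (x i))) *
          eval (Y v) (mp (x (sw i)))) +
        ∑ i, (∑ j, eval (T v) (mp' (F j)) * eval (Y v) (mp (pderiv j (x i)))) *
          eval (Z v) (x (sw i)))
  have hZ : ∀ i, IsPolyFun (fun v => Z v i) := fun i =>
    (IsPolyFun.coord _).add ((IsPolyFun.const _).mul (IsPolyFun.coord _))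
  have hY : ∀ i, IsPolyFun (fun v => Y v i) := fun i =>
    (IsPolyFun.coord _).sub ((IsPolyFun.const _).mul (IsPolyFun.coord _))
  have hPh : IsPolyFun Ph := IsPolyFun.sum fun i => (IsPolyFun.comp hZ _).mul (IsPolyFun.comp hY _)
  have hW : ∀ H, IsPolyFun (fun v => eval (W v) H) := fun H => IsPolyFun.comp_snoc hZ
    ((IsPolyFun.coord _).add ((IsPolyFun.const _).mul hPh)) H
  have hT : ∀ H, IsPolyFun (fun v => eval (T v) H) := fun H => IsPolyFun.comp_snoc hY
    ((IsPolyFun.coord _).sub ((IsPolyFun.const _).mul hPh)) H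
  have hf : IsPolyFun f := ((hW _).sub (hT _)).sub ((IsPolyFun.const _).mul
    ((IsPolyFun.sum fun i => (IsPolyFun.sum fun j => (hW _).mul (IsPolyFun.comp hZ _)).mul
      (IsPolyFun.comp hY _)).add
      (IsPolyFun.sum fun i => (IsPolyFun.sum fun j => (hT _).mul (IsPolyFun.comp hY _)).mul
      (IsPolyFun.comp hZ _))))
  have hreal : ∀ v : Fin 3 ⊕ Fin 3 ⊕ Unit → ℝ, f (fun i => (v i : ℂ)) = 0 := by
    intro v
    set v' : V := fun i => (v i : ℂ) with hv'
    have hYZ : Y v' = fun i => (starRingEnd ℂ) (Z v' i) := by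
      funext i; simp [Y, Z, hv', sub_eq_add_neg]
    have e3 : ∀ H : MvPolynomial (Fin 3) ℂ,
        eval (Y v') (mp H) = (starRingEnd ℂ) (eval (Z v') H) := by
      intro H; rw [hYZ, conj_eval]
    have hPhi : Ph v' = Phi (x 0) (x 1) (x 2) (Z v') := by
      simp [Ph, Phi, e3, Fin.sum_univ_three, sw]
    have hPc : (starRingEnd ℂ) (Ph v') = Ph v' := by
      rw [hPhi]; simp [Phi]; ring
    have e4 : ∀ H : MvPolynomial (Fin 4) ℂ,
        eval (T v') (mp' H) = (starRingEnd ℂ) (eval (W v') H) := by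
      intro H
      rw [conj_eval_snoc, map_add, map_mul, hPc, conj_I, ← hYZ]
      simp [T, mp', hv', sub_eq_add_neg]
    have key := h (Z v') (v (.inr (.inr ())))
    rw [← hPhi] at key
    change (eval (W v') G / (2 * I) - ∑ j, eval (W v') (F j) * _).re = 0 at key
    set A := eval (W v') G
    set B := ∑ j, eval (W v') (F j) * PhiD (x 0) (x 1) (x 2) j (Z v') with hB
    have key2 : A - (starRingEnd ℂ) A = 2 * I * (B + (starRingEnd ℂ) B) := by
      have h1 : (A / (2 * I) - B) + (starRingEnd ℂ) (A / (2 * I) - B) = 0 := by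
        rw [add_conj, key]; simp
      simp only [map_sub, map_div₀, map_mul, conj_I, map_ofNat] at h1
      field_simp at h1
      linear_combination h1
    simp only [f, e3, e4]
    rw [key2]
    simp only [hB, PhiD, Fin.sum_univ_three, sw, map_add, map_mul, conj_conj]
    simp
    ring
  have := hf.eq_zero_of_real hreal (Sum.elim (fun i => (z i + (starRingEnd ℂ) (z' i)) / 2)
    (Sum.elim (fun i => (z i - (starRingEnd ℂ) (z' i)) / (2 * I))
      (fun _ => (w + (starRingEnd ℂ) w') / 2)))
  set v₀ : V := _ with hv₀
  change f v₀ = 0 at this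
  have hZ0 : Z v₀ = z := by funext i; simp [Z, hv₀]; field_simp; ring
  have hY0 : Y v₀ = fun i => (starRingEnd ℂ) (z' i) := by
    funext i; simp [Y, hv₀]; field_simp; ring
  have e3 : ∀ H : MvPolynomial (Fin 3) ℂ,
      eval (Y v₀) (mp H) = (starRingEnd ℂ) (eval z' H) := by
    intro H; rw [hY0, conj_eval]
  have hP0 : w - (starRingEnd ℂ) w' = 2 * I * Ph v₀ := by
    rw [hw]; simp only [Ph, e3, hZ0]
  have hW0 : W v₀ = Fin.snoc z w := by
    simp only [W, hZ0]
    congr 1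
    simp only [hv₀, Sum.elim_inr]
    linear_combination -hP0 / 2
  have hT0 : T v₀ = Fin.snoc (fun i => (starRingEnd ℂ) (z' i)) ((starRingEnd ℂ) w') := by
    simp only [T, hY0]
    congr 1
    simp only [hv₀, Sum.elim_inr]
    linear_combination hP0 / 2
  have e4 : ∀ H : MvPolynomial (Fin 4) ℂ, eval (T v₀) (mp' H) =
      (starRingEnd ℂ) (eval (Fin.snoc z' w' : Fin 4 → ℂ) H) := by
    intro H; rw [conj_eval_snoc, hT0]
  simp only [f, e3, e4, hW0, hZ0] at this
  simp only [map_sum, map_mul]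
  exact sub_eq_zero.mp this

/-! ### Monomial maps -/

/-- The triple of monomials with coefficients `c` and exponent vectors given by the rows of `e`. -/
def monomials (c : Fin 3 → ℂ) (e : Fin 3 → Fin 3 → ℕ) (i : Fin 3) : MvPolynomial (Fin 3) ℂ :=
  mon (c i) (e i)

/-- The complex matrix of exponents. -/
def expMatrix (e : Fin 3 → Fin 3 → ℕ) : Matrix (Fin 3) (Fin 3) ℂ := Matrix.of fun i j => (e i j : ℂ)

theorem expMatrix_det_ne_zero {a b g : Fin 3 → ℕ} (h : edet a b g ≠ 0) :
    (expMatrix ![a, b, g]).det ≠ 0 := by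
  have : (expMatrix ![a, b, g]).det = (edet a b g : ℂ) := by
    simp [expMatrix, edet, Matrix.det_fin_three]
    ring
  rw [this]
  exact_mod_cast h

theorem mon_eq_monomial (c : ℂ) (e : Fin 3 → ℕ) :
    mon c e = monomial (Finsupp.equivFunOnFinite.symm e) c := by
  rw [monomial_eq, Finsupp.prod_fintype _ _ (by simp), Fin.prod_univ_three]
  simp [mon, mul_assoc]

theorem eval_mon (c : ℂ) (e : Fin 3 → ℕ) (z : Fin 3 → ℂ) :
    eval z (mon c e) = c * ∏ j, z j ^ e j := by
  simp [mon, Fin.prod_univ_three, mul_assoc]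

theorem eval_mon_zero {e : Fin 3 → ℕ} (c : ℂ) (he : e ≠ 0) : eval 0 (mon c e) = 0 := by
  obtain ⟨j, hj⟩ := Function.ne_iff.mp he
  rw [eval_mon, Finset.prod_eq_zero (Finset.mem_univ j) (zero_pow hj), mul_zero]

theorem eval_mon_ne_zero {c : ℂ} (hc : c ≠ 0) (e : Fin 3 → ℕ) {z : Fin 3 → ℂ} (hz : ∀ j, z j ≠ 0) :
    eval z (mon c e) ≠ 0 := by
  rw [eval_mon]
  exact mul_ne_zero hc (Finset.prod_ne_zero_iff.mpr fun j _ => pow_ne_zero _ (hz j))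

/-- Euler's relation `z_j ∂_j m = e_j m` for a monomial `m`. -/
theorem X_mul_pderiv_mon (c : ℂ) (e : Fin 3 → ℕ) (j : Fin 3) :
    X j * pderiv j (mon c e) = C (e j : ℂ) * mon c e := by
  rw [mon_eq_monomial, pderiv_monomial, X, monomial_mul, C_mul_monomial]
  rcases Nat.eq_zero_or_pos (e j) with h | h
  · simp [h]
  · have : Finsupp.single j 1 + (Finsupp.equivFunOnFinite.symm e - Finsupp.single j 1) =
        Finsupp.equivFunOnFinite.symm e := by
      ext i
      by_cases hij : j = i
      · subst hij; simp; omega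
      · simp [hij]
    rw [this]
    simp [mul_comm]

theorem eval_mul_pderiv_mon (c : ℂ) (e : Fin 3 → ℕ) (j : Fin 3) (z : Fin 3 → ℂ) :
    z j * eval z (pderiv j (mon c e)) = e j * eval z (mon c e) := by
  simpa using congrArg (eval z) (X_mul_pderiv_mon c e j)

variable {c : Fin 3 → ℂ} {e : Fin 3 → Fin 3 → ℕ}

theorem exponent_ne_zero (hM : (expMatrix e).det ≠ 0) (i : Fin 3) : e i ≠ 0 := by
  intro h
  exact hM (Matrix.det_eq_zero_of_row_eq_zero i fun j => by simp [expMatrix, h])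

/-- A nondegenerate monomial map is onto the complex torus. -/
theorem exists_eval_monomials_eq (hc : ∀ i, c i ≠ 0) (hM : (expMatrix e).det ≠ 0) {y : Fin 3 → ℂ}
    (hy : ∀ i, y i ≠ 0) : ∃ z : Fin 3 → ℂ, (fun i => eval z (monomials c e i)) = y := by
  set l := (expMatrix e)⁻¹.mulVec (fun i => Complex.log (y i / c i)) with hl
  have hl' : (expMatrix e).mulVec l = fun i => Complex.log (y i / c i) := by
    rw [hl, Matrix.mulVec_mulVec, Matrix.mul_nonsing_inv _ (isUnit_iff_ne_zero.mpr hM),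
      Matrix.one_mulVec]
  refine ⟨fun j => Complex.exp (l j), funext fun i => ?_⟩
  have h1 := congrFun hl' i
  simp only [Matrix.mulVec, dotProduct, expMatrix, Matrix.of_apply] at h1
  simp only [monomials, eval_mon, ← Complex.exp_nat_mul, ← Complex.exp_sum]
  rw [h1, Complex.exp_log (div_ne_zero (hy i) (hc i)), mul_div_cancel₀ _ (hc i)]

theorem dense_torus : Dense {y : Fin 3 → ℂ | ∀ i, y i ≠ 0} := by
  have : {y : Fin 3 → ℂ | ∀ i, y i ≠ 0} = Set.pi Set.univ fun _ => ({0}ᶜ : Set ℂ) := by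
    ext; simp
  rw [this]
  exact dense_pi _ fun _ _ => dense_compl_singleton 0

theorem continuous_eval_snoc {T : Type*} [TopologicalSpace T] {y : T → Fin 3 → ℂ} {w : T → ℂ}
    (hy : Continuous y) (hw : Continuous w) (H : MvPolynomial (Fin 4) ℂ) :
    Continuous fun t => eval (Fin.snoc (y t) (w t) : Fin 4 → ℂ) H := by
  refine (MvPolynomial.continuous_eval H).comp (continuous_pi fun i => ?_)
  induction i using Fin.lastCases with
  | last => simpa only [Fin.snoc_last] using hw
  | cast i => simpa only [Fin.snoc_castSucc] using (continuous_pi_iff.mp hy) i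

/-! ### Pushing vector fields forward -/

/-- The components of the image of the vector field `F` under the map with components `x`. -/
def pushField (x : Fin 3 → MvPolynomial (Fin 3) ℂ) (F : Fin 3 → MvPolynomial (Fin 4) ℂ)
    (z : Fin 3 → ℂ) (w : ℂ) (i : Fin 3) : ℂ :=
  ∑ j, eval (Fin.snoc z w : Fin 4 → ℂ) (F j) * eval z (pderiv j (x i))

/-- Conjugation on `ℂ³` adapted to the Hermitian form `p q̄ + q p̄ + r r̄`. -/
def twist (η : Fin 3 → ℂ) (i : Fin 3) : ℂ := (starRingEnd ℂ) (η (sw i))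

theorem sw_sw (i : Fin 3) : sw (sw i) = i := by fin_cases i <;> rfl

theorem sum_sw {M : Type*} [AddCommMonoid M] (f : Fin 3 → M) : ∑ i, f (sw i) = ∑ i, f i := by
  simp [Fin.sum_univ_three, sw, add_comm]

theorem conj_twist (η : Fin 3 → ℂ) (i : Fin 3) : (starRingEnd ℂ) (twist η (sw i)) = η i := by
  simp [twist, sw_sw]

/-- The polynomial fields `h`, `G` define an infinitesimal automorphism of the hyperquadric
`Im w = p q̄ + q p̄ + r r̄`, in polarized form. -/
def IsQuadricField (h : Fin 3 → MvPolynomial (Fin 4) ℂ) (G : MvPolynomial (Fin 4) ℂ) : Prop :=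
  ∀ (x η : Fin 3 → ℂ) (w τ : ℂ), w - τ = 2 * I * ∑ i, x i * η i →
    eval (Fin.snoc x w : Fin 4 → ℂ) G -
        (starRingEnd ℂ) (eval (Fin.snoc (twist η) ((starRingEnd ℂ) τ) : Fin 4 → ℂ) G) =
      2 * I * ((∑ i, eval (Fin.snoc x w : Fin 4 → ℂ) (h i) * η i) +
        ∑ i, (starRingEnd ℂ)
          (eval (Fin.snoc (twist η) ((starRingEnd ℂ) τ) : Fin 4 → ℂ) (h (sw i))) * x i)

theorem IsInfCR.polarize' {F : Fin 3 → MvPolynomial (Fin 4) ℂ} {G : MvPolynomial (Fin 4) ℂ}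
    {x : Fin 3 → MvPolynomial (Fin 3) ℂ}
    (h : IsInfCR (x 0) (x 1) (x 2) F G) (z z' η : Fin 3 → ℂ) (w τ : ℂ)
    (hη : (fun i => eval z' (x i)) = twist η)
    (hw : w - τ = 2 * I * ∑ i, eval z (x i) * η i) :
    eval (Fin.snoc z w : Fin 4 → ℂ) G -
        (starRingEnd ℂ) (eval (Fin.snoc z' ((starRingEnd ℂ) τ) : Fin 4 → ℂ) G) =
      2 * I * ((∑ i, pushField x F z w i * η i) +
        ∑ i, (starRingEnd ℂ) (pushField x F z' ((starRingEnd ℂ) τ) (sw i)) * eval z (x i)) := by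
  have hη' : ∀ i, (starRingEnd ℂ) (eval z' (x (sw i))) = η i := fun i => by
    rw [← conj_twist η i, ← hη]
  have := h.polarize z z' w ((starRingEnd ℂ) τ) (by simpa [hη'] using hw)
  simp only [hη'] at this
  rw [this, ← sum_sw fun i => (starRingEnd ℂ) (pushField x F z' ((starRingEnd ℂ) τ) (sw i)) *
    eval z (x i)]
  simp only [sw_sw, pushField]

/-- An infinitesimal automorphism of a nondegenerate monomial model descends to a polynomial
infinitesimal automorphism of the hyperquadric. -/
theorem IsInfCR.exists_quadricField (hc : ∀ i, c i ≠ 0) (hM : (expMatrix e).det ≠ 0)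
    {F : Fin 3 → MvPolynomial (Fin 4) ℂ} {G : MvPolynomial (Fin 4) ℂ}
    (h : IsInfCR (monomials c e 0) (monomials c e 1) (monomials c e 2) F G) :
    ∃ (h' : Fin 3 → MvPolynomial (Fin 4) ℂ) (G' : MvPolynomial (Fin 4) ℂ),
      (∀ z w i, pushField (monomials c e) F z w i =
        eval (Fin.snoc (fun i => eval z (monomials c e i)) w : Fin 4 → ℂ) (h' i)) ∧
      (∀ z w, eval (Fin.snoc z w : Fin 4 → ℂ) G =
        eval (Fin.snoc (fun i => eval z (monomials c e i)) w : Fin 4 → ℂ) G') ∧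
      IsQuadricField h' G' := by
  set x := monomials c e with hx
  have hpol := @IsInfCR.polarize' F G x h
  have hx0 : (fun i => eval 0 (x i)) = twist 0 := by
    funext i
    rw [hx, monomials, eval_mon_zero _ (exponent_ne_zero hM i)]
    simp [twist]
  -- coordinates of the hyperquadric as polynomial functions
  have hco : ∀ i : Fin 3, IsPolyFun (fun v : Fin 4 → ℂ => v i.castSucc) :=
    fun i => IsPolyFun.coord _
  have hla : IsPolyFun (fun v : Fin 4 → ℂ => v (Fin.last 3)) := IsPolyFun.coord _
  have hcj : ∀ (z' : Fin 3 → ℂ) (t : (Fin 4 → ℂ) → ℂ) (H : MvPolynomial (Fin 4) ℂ), IsPolyFun t →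
      IsPolyFun (fun v => (starRingEnd ℂ)
        (eval (Fin.snoc z' ((starRingEnd ℂ) (t v)) : Fin 4 → ℂ) H)) := by
    intro z' t H ht
    simp only [conj_eval_snoc, conj_conj]
    exact IsPolyFun.comp_snoc (c := fun _ i => (starRingEnd ℂ) (z' i))
      (fun i => IsPolyFun.const _) ht _
  have hcp : ∀ (z' : Fin 3 → ℂ) (t : (Fin 4 → ℂ) → ℂ) (i : Fin 3), IsPolyFun t →
      IsPolyFun (fun v => (starRingEnd ℂ) (pushField x F z' ((starRingEnd ℂ) (t v)) i)) := by
    intro z' t i ht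
    simp only [pushField, map_sum, map_mul]
    exact IsPolyFun.sum fun j => (hcj z' t (F j) ht).mul (IsPolyFun.const _)
  have hG : ∃ G', ∀ z w, eval (Fin.snoc z w : Fin 4 → ℂ) G =
      eval (Fin.snoc (fun i => eval z (x i)) w : Fin 4 → ℂ) G' := by
    have : IsPolyFun (fun v : Fin 4 → ℂ =>
        (starRingEnd ℂ) (eval (Fin.snoc 0 ((starRingEnd ℂ) (v (Fin.last 3))) : Fin 4 → ℂ) G) +
        2 * I * ∑ i : Fin 3, (starRingEnd ℂ)
          (pushField x F 0 ((starRingEnd ℂ) (v (Fin.last 3))) (sw i)) * v i.castSucc) :=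
      (hcj _ _ _ hla).add ((IsPolyFun.const _).mul
        (IsPolyFun.sum fun i => (hcp _ _ _ hla).mul (hco i)))
    obtain ⟨G', hG'⟩ := this
    refine ⟨G', fun z w => ?_⟩
    rw [← hG']
    have := hpol z 0 0 w w hx0 (by simp)
    simp only [Pi.zero_apply, mul_zero, Finset.sum_const_zero, zero_add] at this
    simp only [Fin.snoc_last, Fin.snoc_castSucc]
    linear_combination this
  obtain ⟨G', hG'⟩ := hG
  have hdot : ∀ η : Fin 3 → ℂ, (∀ i, η i ≠ 0) → ∃ p : MvPolynomial (Fin 4) ℂ, ∀ z w,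
      ∑ i, pushField x F z w i * η i = eval (Fin.snoc (fun i => eval z (x i)) w : Fin 4 → ℂ) p := by
    intro η hη
    obtain ⟨z', hz'⟩ := exists_eval_monomials_eq hc hM (y := twist η)
      (fun i => by simpa [twist] using hη _)
    have hτ : IsPolyFun (fun v : Fin 4 → ℂ =>
        v (Fin.last 3) - 2 * I * ∑ i : Fin 3, v i.castSucc * η i) :=
      hla.sub ((IsPolyFun.const _).mul (IsPolyFun.sum fun i => (hco i).mul (IsPolyFun.const _)))
    obtain ⟨p, hp⟩ := ((IsPolyFun.const (1 / (2 * I))).mul ((IsPolyFun.comp_snoc hco hla G').sub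
      (hcj z' _ G hτ))).sub (IsPolyFun.sum (s := Finset.univ)
        fun i : Fin 3 => (hcp z' _ (sw i) hτ).mul (hco i))
    refine ⟨p, fun z w => ?_⟩
    rw [← hp]
    have := hpol z z' η w (w - 2 * I * ∑ i, eval z (x i) * η i) hz' (by ring)
    rw [hG'] at this
    simp only [Fin.snoc_castSucc, Fin.snoc_last]
    rw [this]
    field_simp
    ring
  have hh : ∀ i, ∃ p : MvPolynomial (Fin 4) ℂ, ∀ z w,
      pushField x F z w i = eval (Fin.snoc (fun i => eval z (x i)) w : Fin 4 → ℂ) p := by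
    intro i
    obtain ⟨p, hp⟩ := hdot (fun _ => 1) (by simp)
    obtain ⟨q, hq⟩ := hdot (fun j => if j = i then 2 else 1) (by intro j; split_ifs <;> simp)
    refine ⟨q - p, fun z w => ?_⟩
    rw [map_sub, ← hp, ← hq]
    fin_cases i <;> simp [Fin.sum_univ_three] <;> ring
  choose h' hh' using hh
  refine ⟨h', G', fun z w i => hh' i z w, hG', ?_⟩
  intro y η w τ hw
  obtain rfl : τ = w - 2 * I * ∑ i, y i * η i := by linear_combination -hw
  have hcts : Continuous fun t : (Fin 3 → ℂ) × (Fin 3 → ℂ) => twist t.2 := by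
    refine continuous_pi fun i => ?_
    simp only [twist]
    fun_prop
  have hcw : Continuous fun t : (Fin 3 → ℂ) × (Fin 3 → ℂ) =>
      (starRingEnd ℂ) (w - 2 * I * ∑ i, t.1 i * t.2 i) := by fun_prop
  have hL : Continuous fun t : (Fin 3 → ℂ) × (Fin 3 → ℂ) =>
      eval (Fin.snoc t.1 w : Fin 4 → ℂ) G' - (starRingEnd ℂ) (eval (Fin.snoc (twist t.2)
        ((starRingEnd ℂ) (w - 2 * I * ∑ i, t.1 i * t.2 i)) : Fin 4 → ℂ) G') :=
    (continuous_eval_snoc continuous_fst continuous_const _).sub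
      (continuous_conj.comp (continuous_eval_snoc hcts hcw _))
  have hR : Continuous fun t : (Fin 3 → ℂ) × (Fin 3 → ℂ) =>
      2 * I * ((∑ i, eval (Fin.snoc t.1 w : Fin 4 → ℂ) (h' i) * t.2 i) +
        ∑ i, (starRingEnd ℂ) (eval (Fin.snoc (twist t.2)
          ((starRingEnd ℂ) (w - 2 * I * ∑ i, t.1 i * t.2 i)) : Fin 4 → ℂ) (h' (sw i))) * t.1 i) := by
    refine continuous_const.mul ((continuous_finsetSum _ fun i _ =>
      (continuous_eval_snoc continuous_fst continuous_const _).mul ?_).add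
      (continuous_finsetSum _ fun i _ =>
      (continuous_conj.comp (continuous_eval_snoc hcts hcw _)).mul ?_)) <;> fun_prop
  refine congrFun (Continuous.ext_on (dense_torus.prod dense_torus) hL hR ?_) (y, η)
  rintro ⟨y, η⟩ ⟨hy, hη⟩
  obtain ⟨z, rfl⟩ := exists_eval_monomials_eq hc hM hy
  obtain ⟨z', hz'⟩ := exists_eval_monomials_eq hc hM (y := twist η)
      (fun i => by simpa [twist] using hη _)
  have := hpol z z' η w (w - 2 * I * ∑ i, eval z (x i) * η i) hz' (by ring)
  simp only [hG', hh'] at this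
  rw [hz'] at this
  exact this

/-! ### Polynomial infinitesimal automorphisms of the hyperquadric -/

/-- First-order Taylor expansion along a ray. -/
theorem exists_eval_smul_snoc (p : MvPolynomial (Fin 4) ℂ) (x : Fin 3 → ℂ) (w : ℂ) :
    ∃ q : Polynomial ℂ, ∀ s : ℂ, eval (Fin.snoc (s • x) w : Fin 4 → ℂ) p =
      eval (Fin.snoc 0 w : Fin 4 → ℂ) p +
        s * ∑ j : Fin 3, eval (Fin.snoc 0 w : Fin 4 → ℂ) (pderiv j.castSucc p) * x j +
        s ^ 2 * q.eval s := by
  induction p using MvPolynomial.induction_on with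
  | C a => exact ⟨0, fun s => by simp⟩
  | add p₁ p₂ h₁ h₂ =>
    obtain ⟨q₁, h₁⟩ := h₁
    obtain ⟨q₂, h₂⟩ := h₂
    refine ⟨q₁ + q₂, fun s => ?_⟩
    simp only [map_add, h₁, h₂, add_mul, Finset.sum_add_distrib, Polynomial.eval_add]
    ring
  | mul_X p n h =>
    obtain ⟨q, h⟩ := h
    induction n using Fin.lastCases with
    | last =>
      refine ⟨Polynomial.C w * q, fun s => ?_⟩
      have hne : ∀ j : Fin 3, pderiv j.castSucc (X (Fin.last 3) : MvPolynomial (Fin 4) ℂ) = 0 :=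
        fun j => pderiv_X_of_ne (Fin.castSucc_lt_last j).ne'
      simp only [map_mul, h, eval_X, Fin.snoc_last, pderiv_mul, hne, mul_zero, add_zero,
        Polynomial.eval_mul, Polynomial.eval_C, Fin.sum_univ_three]
      ring
    | cast k =>
      refine ⟨Polynomial.C (x k) * (Polynomial.C (∑ j : Fin 3,
        eval (Fin.snoc 0 w : Fin 4 → ℂ) (pderiv j.castSucc p) * x j) + Polynomial.X * q),
        fun s => ?_⟩
      have hd : ∀ j : Fin 3, eval (Fin.snoc 0 w : Fin 4 → ℂ) (pderiv j.castSucc (p * X k.castSucc))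
          = if j = k then eval (Fin.snoc 0 w : Fin 4 → ℂ) p else 0 := by
        intro j
        simp only [pderiv_mul, map_add, map_mul, eval_X, Fin.snoc_castSucc, Pi.zero_apply,
          mul_zero, zero_add]
        split_ifs with hjk
        · subst hjk; simp
        · rw [pderiv_X_of_ne (fun hh => hjk (Fin.castSucc_injective _ hh).symm)]; simp
      simp only [hd, map_mul, h, eval_X, Fin.snoc_castSucc, Pi.smul_apply, smul_eq_mul,
        Pi.zero_apply, mul_zero, zero_add, ite_mul, zero_mul, Finset.sum_ite_eq', Finset.mem_univ,
        if_true, Polynomial.eval_mul, Polynomial.eval_add, Polynomial.eval_C, Polynomial.eval_X]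
      ring

/-- If `f(s) = g(1/s)` for polynomials `f`, `g`, then `f` is constant. -/
theorem Polynomial.natDegree_eq_zero_of_eval_inv {f g : Polynomial ℂ}
    (h : ∀ s : ℝ, s ≠ 0 → f.eval (s : ℂ) = g.eval ((s : ℂ)⁻¹)) : f.natDegree = 0 := by
  by_contra hf
  have hf0 : f ≠ 0 := fun h0 => hf (by simp [h0])
  have key : f * Polynomial.X ^ g.natDegree = g.reverse := by
    refine Polynomial.eq_of_infinite_eval_eq _ _
      (Set.Infinite.mono ?_ (((Set.Ioi_infinite (0 : ℝ)).image Complex.ofReal_injective.injOn)))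
    rintro _ ⟨s, hs, rfl⟩
    have hs0 : s ≠ 0 := ne_of_gt hs
    have hsc : (s : ℂ) ≠ 0 := by exact_mod_cast hs0
    let _ : Invertible (s : ℂ)⁻¹ := invertibleOfNonzero (inv_ne_zero hsc)
    have := Polynomial.eval₂_reverse_mul_pow (RingHom.id ℂ) ((s : ℂ)⁻¹) g
    rw [invOf_eq_inv, inv_inv] at this
    simp only [Polynomial.eval₂_id] at this
    simp only [Set.mem_ofPred_eq, Polynomial.eval_mul, Polynomial.eval_pow, Polynomial.eval_X,
      h s hs0, ← this]
    rw [mul_assoc, ← mul_pow, inv_mul_cancel₀ hsc, one_pow, mul_one]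
  have h1 : (f * Polynomial.X ^ g.natDegree).natDegree = f.natDegree + g.natDegree := by
    rw [Polynomial.natDegree_mul hf0 (by simp), Polynomial.natDegree_X_pow]
  have h2 := Polynomial.reverse_natDegree_le g
  rw [← key, h1] at h2
  omega

theorem Polynomial.eval_eq_eval_zero_of_eval_inv {f g : Polynomial ℂ}
    (h : ∀ s : ℝ, s ≠ 0 → f.eval (s : ℂ) = g.eval ((s : ℂ)⁻¹)) (s : ℂ) :
    f.eval s = f.eval 0 := by
  rw [Polynomial.eq_C_of_natDegree_eq_zero (Polynomial.natDegree_eq_zero_of_eval_inv h)]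
  simp

section Quadric

variable {h : Fin 3 → MvPolynomial (Fin 4) ℂ} {G : MvPolynomial (Fin 4) ℂ}

/-- The value at the origin of the `x`-space of the `i`-th component. -/
def fieldConst (h : Fin 3 → MvPolynomial (Fin 4) ℂ) (w : ℂ) (i : Fin 3) : ℂ :=
  eval (Fin.snoc 0 w : Fin 4 → ℂ) (h i)

/-- The linear part at the origin of the `x`-space of the field. -/
def fieldLin (h : Fin 3 → MvPolynomial (Fin 4) ℂ) (w : ℂ) (i j : Fin 3) : ℂ :=
  eval (Fin.snoc 0 w : Fin 4 → ℂ) (pderiv j.castSucc (h i))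

theorem twist_zero : twist 0 = 0 := by funext i; simp [twist]

theorem IsQuadricField.eval_zero (H : IsQuadricField h G) (w : ℂ) :
    (starRingEnd ℂ) (eval (Fin.snoc 0 ((starRingEnd ℂ) w) : Fin 4 → ℂ) G) =
      eval (Fin.snoc 0 w : Fin 4 → ℂ) G := by
  have := H 0 0 w w (by simp)
  simp only [twist_zero, Pi.zero_apply, mul_zero, Finset.sum_const_zero, add_zero] at this
  exact (sub_eq_zero.mp this).symm

theorem IsQuadricField.eval_eq (H : IsQuadricField h G) (x : Fin 3 → ℂ) (w : ℂ) :
    eval (Fin.snoc x w : Fin 4 → ℂ) G = eval (Fin.snoc 0 w : Fin 4 → ℂ) G +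
      2 * I * ∑ i, (starRingEnd ℂ) (fieldConst h ((starRingEnd ℂ) w) (sw i)) * x i := by
  have := H x 0 w w (by simp)
  simp only [twist_zero, Pi.zero_apply, mul_zero, Finset.sum_const_zero, zero_add,
    H.eval_zero] at this
  simp only [fieldConst]
  linear_combination this

theorem IsQuadricField.laurent (H : IsQuadricField h G) (x η : Fin 3 → ℂ) (w τ : ℂ)
    (hw : w - τ = 2 * I * ∑ i, x i * η i) :
    (∑ i, eval (Fin.snoc x w : Fin 4 → ℂ) (h i) * η i =
      ∑ i, fieldConst h w i * η i + ∑ i, (∑ j, fieldLin h w i j * x j) * η i +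
        ∑ i, ((starRingEnd ℂ) (fieldConst h ((starRingEnd ℂ) w) (sw i)) -
          (starRingEnd ℂ) (fieldConst h ((starRingEnd ℂ) τ) (sw i))) * x i) ∧
    (eval (Fin.snoc 0 w : Fin 4 → ℂ) G - eval (Fin.snoc 0 τ : Fin 4 → ℂ) G =
      2 * I * (∑ i, (∑ j, fieldLin h w i j * x j) * η i +
        ∑ i, (∑ j, (starRingEnd ℂ) (fieldLin h ((starRingEnd ℂ) τ) (sw i) (sw j)) * η j) *
          x i)) := by
  choose q hq using fun i => exists_eval_smul_snoc (h i) x w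
  choose r hr using fun i => exists_eval_smul_snoc (h i) (twist η) ((starRingEnd ℂ) τ)
  set E₁ := ∑ i, (starRingEnd ℂ) (fieldConst h ((starRingEnd ℂ) w) (sw i)) * x i with hE₁
  set E₁' := ∑ i, (starRingEnd ℂ) (fieldConst h ((starRingEnd ℂ) τ) (sw i)) * x i with hE₁'
  set E₂ := ∑ i, fieldConst h τ i * η i with hE₂
  set E₂' := ∑ i, fieldConst h w i * η i with hE₂'
  set A := ∑ i, (∑ j, fieldLin h w i j * x j) * η i with hA
  set B := ∑ i, (∑ j, (starRingEnd ℂ) (fieldLin h ((starRingEnd ℂ) τ) (sw i) (sw j)) * η j) *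
    x i with hB
  set D := A + B - (eval (Fin.snoc 0 w : Fin 4 → ℂ) G - eval (Fin.snoc 0 τ : Fin 4 → ℂ) G) /
    (2 * I) with hD
  set qq : Polynomial ℂ := ∑ i, Polynomial.C (η i) * q i with hqq
  set rr : Polynomial ℂ :=
    ∑ i, Polynomial.C (x i) * (r (sw i)).map (starRingEnd ℂ) with hrr
  have hql : ∀ s : ℂ, ∑ i, eval (Fin.snoc (s • x) w : Fin 4 → ℂ) (h i) * η i =
      E₂' + s * A + s ^ 2 * qq.eval s := by
    intro s
    simp only [hq, hE₂', hA, hqq, fieldConst, fieldLin, Polynomial.eval_finsetSum,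
      Polynomial.eval_mul, Polynomial.eval_C]
    simp only [Fin.sum_univ_three]
    ring
  have htw : ∀ s : ℝ, twist ((s : ℂ) • η) = (s : ℂ) • twist η := by
    intro s; funext i; simp [twist]
  have hrl : ∀ s : ℝ, ∑ i, (starRingEnd ℂ) (eval (Fin.snoc (twist ((s : ℂ) • η))
      ((starRingEnd ℂ) τ) : Fin 4 → ℂ) (h (sw i))) * x i =
      E₁' + s * B + s ^ 2 * rr.eval (s : ℂ) := by
    intro s
    have hm : ∀ p : Polynomial ℂ, (p.map (starRingEnd ℂ)).eval (s : ℂ) =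
        (starRingEnd ℂ) (p.eval (s : ℂ)) := by
      intro p
      have := Polynomial.eval_map_apply (f := starRingEnd ℂ) (p := p) (x := (s : ℂ))
      rwa [conj_ofReal] at this
    have hsum : ∀ i, (starRingEnd ℂ) (∑ j : Fin 3, eval (Fin.snoc 0 ((starRingEnd ℂ) τ) : Fin 4 → ℂ)
        (pderiv j.castSucc (h i)) * twist η j) =
        ∑ j, (starRingEnd ℂ) (fieldLin h ((starRingEnd ℂ) τ) i (sw j)) * η j := by
      intro i
      rw [← sum_sw fun j => (starRingEnd ℂ) (fieldLin h ((starRingEnd ℂ) τ) i (sw j)) * η j]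
      simp [sw_sw, twist, fieldLin]
    simp only [htw, hr, map_add, map_mul, hsum, map_pow, conj_ofReal]
    simp only [hE₁', hB, hrr, fieldConst, Polynomial.eval_finsetSum,
      Polynomial.eval_mul, Polynomial.eval_C, hm]
    simp only [Fin.sum_univ_three]
    ring
  have hGx : ∀ s : ℂ, eval (Fin.snoc (s • x) w : Fin 4 → ℂ) G =
      eval (Fin.snoc 0 w : Fin 4 → ℂ) G + 2 * I * (s * E₁) := by
    intro s
    rw [H.eval_eq, hE₁]
    simp only [Fin.sum_univ_three, Pi.smul_apply, smul_eq_mul]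
    ring
  have hGy : ∀ s : ℝ, (starRingEnd ℂ) (eval (Fin.snoc (twist ((s : ℂ) • η))
      ((starRingEnd ℂ) τ) : Fin 4 → ℂ) G) =
      eval (Fin.snoc 0 τ : Fin 4 → ℂ) G - 2 * I * (s * E₂) := by
    intro s
    rw [H.eval_eq, map_add, H.eval_zero, hE₂]
    have h2 : (starRingEnd ℂ) (2 : ℂ) = 2 := map_ofNat _ 2
    simp [sw, twist, Fin.sum_univ_three, h2]
    ring
  have key : ∀ s : ℝ, s ≠ 0 →
      (Polynomial.X * qq + Polynomial.X * Polynomial.C (E₁' - E₁) + Polynomial.C D).eval (s : ℂ) =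
      (Polynomial.X * Polynomial.C (E₂ - E₂') - Polynomial.X * rr).eval ((s : ℂ)⁻¹) := by
    intro s hs
    have hsc : (s : ℂ) ≠ 0 := by exact_mod_cast hs
    have h1 := H ((s : ℂ) • x) (((s⁻¹ : ℝ) : ℂ) • η) w τ (by
      rw [hw]
      congr 1
      refine Finset.sum_congr rfl fun i _ => ?_
      simp; field_simp)
    have h2 : ∑ i, eval (Fin.snoc ((s : ℂ) • x) w : Fin 4 → ℂ) (h i) *
        (((s⁻¹ : ℝ) : ℂ) • η) i = (s : ℂ)⁻¹ * (E₂' + s * A + s ^ 2 * qq.eval (s : ℂ)) := by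
      rw [← hql, Finset.mul_sum]
      exact Finset.sum_congr rfl fun i _ => by simp; ring
    have h3 : ∑ i, (starRingEnd ℂ) (eval (Fin.snoc (twist (((s⁻¹ : ℝ) : ℂ) • η))
        ((starRingEnd ℂ) τ) : Fin 4 → ℂ) (h (sw i))) * ((s : ℂ) • x) i =
        s * (E₁' + ((s⁻¹ : ℝ) : ℂ) * B + ((s⁻¹ : ℝ) : ℂ) ^ 2 * rr.eval ((s⁻¹ : ℝ) : ℂ)) := by
      rw [← hrl, Finset.mul_sum]
      exact Finset.sum_congr rfl fun i _ => by simp; ring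
    rw [h2, h3, hGx, hGy] at h1
    simp only [Polynomial.eval_add, Polynomial.eval_sub, Polynomial.eval_mul, Polynomial.eval_X,
      Polynomial.eval_C]
    rw [hD]
    push_cast at h1
    generalize Polynomial.eval (s : ℂ) qq = a at *
    generalize Polynomial.eval (s : ℂ)⁻¹ rr = b at *
    field_simp at h1 ⊢
    linear_combination -h1
  have hf := Polynomial.eval_eq_eval_zero_of_eval_inv key 1
  have hg := Polynomial.eval_eq_eval_zero_of_eval_inv (fun s hs => by
    have := key s⁻¹ (inv_ne_zero hs)
    push_cast at this
    rw [inv_inv] at this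
    exact this.symm) 1
  have h1 := key 1 one_ne_zero
  simp only [Polynomial.eval_add, Polynomial.eval_sub, Polynomial.eval_mul, Polynomial.eval_X,
    Polynomial.eval_C, ofReal_one, inv_one] at hf hg h1
  have hD0 : D = 0 := by linear_combination h1 - hf + hg
  constructor
  · have := hql 1
    rw [one_smul] at this
    simp only [sub_mul, Finset.sum_sub_distrib, ← hE₁, ← hE₁']
    linear_combination this + hf
  · rw [hD] at hD0
    field_simp at hD0
    linear_combination -hD0

end Quadric

/-- Normal form of the fields on the hyperquadric which are tangent to `q = r = 0` along
`p = q = r = 0`. -/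
theorem IsQuadricField.normalForm {h : Fin 3 → MvPolynomial (Fin 4) ℂ}
    {G : MvPolynomial (Fin 4) ℂ} (H : IsQuadricField h G)
    (h1 : ∀ w, fieldConst h w 1 = 0) (h2 : ∀ w, fieldConst h w 2 = 0) :
    ∃ (N : Fin 3 → Fin 3 → ℂ) (e₀ e₁ : ℂ) (n γ κ : ℝ),
      (∀ i j, i ≠ j → N i j = -(starRingEnd ℂ) (N (sw j) (sw i))) ∧
      (∀ i, N i i + (starRingEnd ℂ) (N (sw i) (sw i)) = κ) ∧
      (∀ x w i, eval (Fin.snoc x w : Fin 4 → ℂ) (h i) = (if i = 0 then e₀ + e₁ * w else 0) +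
        ∑ j, N i j * x j + n * w * x i + 2 * I * (starRingEnd ℂ) e₁ * x 1 * x i) ∧
      (∀ x w, eval (Fin.snoc x w : Fin 4 → ℂ) G = γ + κ * w + n * w ^ 2 +
        2 * I * ((starRingEnd ℂ) e₀ + (starRingEnd ℂ) e₁ * w) * x 1) := by
  set g : ℂ → ℂ := fun w => eval (Fin.snoc 0 w : Fin 4 → ℂ) G with hg
  set N := fieldLin h with hN
  set E : ℂ → ℂ := fun w => (starRingEnd ℂ) (fieldConst h ((starRingEnd ℂ) w) 0) with hE
  have hsum : ∀ (u v : ℂ) (x : Fin 3 → ℂ),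
      ∑ i, ((starRingEnd ℂ) (fieldConst h u (sw i)) -
        (starRingEnd ℂ) (fieldConst h v (sw i))) * x i =
      ((starRingEnd ℂ) (fieldConst h u 0) - (starRingEnd ℂ) (fieldConst h v 0)) * x 1 := by
    intro u v x
    simp [Fin.sum_univ_three, sw, h1, h2]
  have hI : ∀ x w i c, c * eval (Fin.snoc x w : Fin 4 → ℂ) (h i) =
      c * fieldConst h w i + c * ∑ j, N w i j * x j + (E w - E (w - 2 * I * (x i * c))) * x 1 := by
    intro x w i c
    have := (H.laurent x (Pi.single i c) w (w - 2 * I * (x i * c)) (by simp [Pi.single_apply])).1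
    rw [hsum] at this
    simp only [Pi.single_apply, mul_ite, mul_zero, Finset.sum_ite_eq', Finset.mem_univ,
      if_true] at this
    simp only [hE, hN]
    linear_combination this
  have hII : ∀ (x : Fin 3 → ℂ) w i c, g w - g (w - 2 * I * (x i * c)) = 2 * I * c * (∑ j, N w i j * x j +
      ∑ k, (starRingEnd ℂ) (N ((starRingEnd ℂ) (w - 2 * I * (x i * c))) (sw k) (sw i)) * x k) := by
    intro x w i c
    have := (H.laurent x (Pi.single i c) w (w - 2 * I * (x i * c)) (by simp [Pi.single_apply])).2
    simp only [Pi.single_apply, mul_ite, mul_zero, Finset.sum_ite_eq', Finset.mem_univ,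
      if_true] at this
    simp only [hg, hN]
    rw [this]
    simp only [mul_add, Finset.mul_sum, Finset.sum_mul]
    congr 1 <;> exact Finset.sum_congr rfl fun _ _ => by ring
  -- the constant term is affine in `w`
  obtain ⟨E₁, hE₁⟩ : ∃ E₁, ∀ t, E t = E 0 + E₁ * t := by
    refine ⟨(eval (Fin.snoc (Pi.single 1 1) 0 : Fin 4 → ℂ) (h 1) - N 0 1 1) / (2 * I),
      fun t => ?_⟩
    have := hI (Pi.single 1 1) 0 1 (-t / (2 * I))
    simp only [h1, Pi.single_apply, mul_ite, mul_zero, mul_one, Finset.sum_ite_eq',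
      Finset.mem_univ, if_true, one_mul] at this
    rw [show (0 : ℂ) - 2 * I * (-t / (2 * I)) = t by field_simp; ring] at this
    field_simp at this ⊢
    linear_combination this
  -- the off-diagonal linear terms are constant and skew
  have hoff : ∀ w τ i j, i ≠ j →
      N w i j = -(starRingEnd ℂ) (N ((starRingEnd ℂ) τ) (sw j) (sw i)) := by
    intro w τ i j hij
    by_cases hwt : w = τ
    · subst hwt
      have := hII (Pi.single j 1) w i 1
      simp only [Pi.single_apply, hij, if_false, mul_zero, sub_zero, sub_self, mul_ite,
        mul_one, Finset.sum_ite_eq', Finset.mem_univ, if_true] at this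
      have h0 : (2 * I : ℂ) ≠ 0 := by simp
      linear_combination (mul_eq_zero.mp this.symm).resolve_left h0
    · have ha := hII (Pi.single i 1) w i ((w - τ) / (2 * I))
      have hb := hII (Pi.single i 1 + Pi.single j 1) w i ((w - τ) / (2 * I))
      simp only [Pi.add_apply, Pi.single_apply, hij, if_false, if_true, mul_add, mul_ite, mul_one,
        mul_zero, Finset.sum_add_distrib, Finset.sum_ite_eq', Finset.mem_univ, one_mul,
        add_zero] at ha hb
      rw [show w - 2 * I * ((w - τ) / (2 * I)) = τ by field_simp; ring] at ha hb
      rw [show 2 * I * ((w - τ) / (2 * I)) = w - τ by field_simp] at ha hb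
      refine eq_neg_of_add_eq_zero_left
        ((mul_eq_zero.mp ?_).resolve_left (sub_ne_zero.mpr hwt))
      linear_combination ha - hb
  have hoff' : ∀ w i j, i ≠ j → N w i j = N 0 i j := fun w i j hij => by
    rw [hoff w 0 i j hij, hoff 0 0 i j hij]
  -- the diagonal terms
  have hdiag : ∀ w τ i, g w - g τ =
      (w - τ) * (N w i i + (starRingEnd ℂ) (N ((starRingEnd ℂ) τ) (sw i) (sw i))) := by
    intro w τ i
    have ha := hII (Pi.single i 1) w i ((w - τ) / (2 * I))
    simp only [Pi.single_apply, if_true, mul_ite, mul_one,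
        mul_zero, Finset.sum_ite_eq', Finset.mem_univ, one_mul] at ha
    rw [show w - 2 * I * ((w - τ) / (2 * I)) = τ by field_simp; ring,
      show 2 * I * ((w - τ) / (2 * I)) = w - τ by field_simp] at ha
    exact ha
  have hsym : ∀ w i, (starRingEnd ℂ) (N ((starRingEnd ℂ) w) (sw i) (sw i)) =
      N w i i - (N 0 i i - (starRingEnd ℂ) (N 0 (sw i) (sw i))) := by
    intro w i
    by_cases hw : w = 0
    · subst hw; simp
    · have ha := hdiag w 0 i
      have hb := hdiag 0 w i
      rw [map_zero] at ha
      apply mul_left_cancel₀ hw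
      linear_combination ha + hb
  have hlin : ∀ w i, N w i i = N 0 i i + (N 1 i i - N 0 i i) * w := by
    intro w i
    have ha := hdiag w 1 i
    have hb := hdiag w 0 i
    have hc := hdiag 1 0 i
    rw [hsym] at ha hb hc
    linear_combination ha - hb + hc
  have hgq : ∀ w i, g w = g 0 +
      (N 0 i i + (starRingEnd ℂ) (N 0 (sw i) (sw i))) * w + (N 1 i i - N 0 i i) * w ^ 2 := by
    intro w i
    have ha := hdiag w 0 i
    rw [map_zero, hlin w i] at ha
    linear_combination ha
  have hn : ∀ i, N 1 i i - N 0 i i = N 1 2 2 - N 0 2 2 := by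
    intro i
    linear_combination (hgq 1 2 + hgq (-1) 2 - hgq 1 i - hgq (-1) i) / 2
  have hκ : ∀ i, N 0 i i + (starRingEnd ℂ) (N 0 (sw i) (sw i)) =
      N 0 2 2 + (starRingEnd ℂ) (N 0 2 2) := by
    intro i
    have h22 : sw 2 = 2 := rfl
    have := hgq 1 2
    rw [h22] at this
    linear_combination this - hgq 1 i - hn i
  have hnr : (starRingEnd ℂ) (N 1 2 2 - N 0 2 2) = N 1 2 2 - N 0 2 2 := by
    have := hsym 1 2
    rw [map_one, show sw 2 = 2 from rfl] at this
    rw [map_sub, this]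
    ring
  have hκr : (starRingEnd ℂ) (N 0 2 2 + (starRingEnd ℂ) (N 0 2 2)) =
      N 0 2 2 + (starRingEnd ℂ) (N 0 2 2) := by
    rw [map_add, conj_conj, add_comm]
  have hγr : (starRingEnd ℂ) (g 0) = g 0 := by
    have := H.eval_zero 0
    rwa [map_zero] at this
  obtain ⟨n, hn'⟩ := conj_eq_iff_real.mp hnr
  obtain ⟨κ, hκ'⟩ := conj_eq_iff_real.mp hκr
  obtain ⟨γ, hγ'⟩ := conj_eq_iff_real.mp hγr
  have hE0 : ∀ w, fieldConst h w 0 =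
      (starRingEnd ℂ) (E 0) + (starRingEnd ℂ) E₁ * w := by
    intro w
    have := congrArg (starRingEnd ℂ) (hE₁ ((starRingEnd ℂ) w))
    simpa [hE] using this
  refine ⟨N 0, (starRingEnd ℂ) (E 0), (starRingEnd ℂ) E₁, n, γ, κ, ?_, ?_, ?_, ?_⟩
  · intro i j hij
    rw [hoff 0 0 i j hij, map_zero]
  · intro i
    rw [hκ, hκ']
  · intro x w i
    have hx := hI x w i 1
    rw [hE₁ w, hE₁ (w - _)] at hx
    have hNs : ∑ j, N w i j * x j = ∑ j, N 0 i j * x j + n * w * x i := by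
      rw [← hn', ← hn i]
      have : ∀ j, N w i j * x j = N 0 i j * x j +
          if i = j then (N 1 i i - N 0 i i) * w * x i else 0 := by
        intro j
        split_ifs with hij
        · subst hij; rw [hlin w]; ring
        · rw [hoff' w i j hij, add_zero]
      simp only [this, Finset.sum_add_distrib, Finset.sum_ite_eq, Finset.mem_univ, if_true]
    have hei : fieldConst h w i =
        if i = 0 then (starRingEnd ℂ) (E 0) + (starRingEnd ℂ) E₁ * w else 0 := by
      fin_cases i
      · simpa using hE0 w
      · simpa using h1 w
      · simpa using h2 w
    rw [hNs, hei] at hx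
    rw [conj_conj E₁]
    linear_combination hx
  · intro x w
    rw [H.eval_eq]
    change g w + _ = _
    have hx : ∑ i, (starRingEnd ℂ) (fieldConst h ((starRingEnd ℂ) w) (sw i)) * x i =
        E w * x 1 := by
      simp [Fin.sum_univ_three, sw, h1, h2, hE]
    rw [hx, hE₁ w, hgq w 2, show sw 2 = 2 from rfl, ← hn', hκ', hγ', conj_conj, conj_conj]
    ring

/-! ### Normal form of the infinitesimal automorphisms -/

/-- The exponent vector `e` as a finitely supported function. -/
def expo (e : Fin 3 → ℕ) : Fin 3 →₀ ℕ := Finsupp.equivFunOnFinite.symm e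

theorem expo_apply (e : Fin 3 → ℕ) (j : Fin 3) : expo e j = e j := rfl

theorem degree_expo (e : Fin 3 → ℕ) : (expo e).degree = degE e := by
  simp [Finsupp.degree_eq_sum, Fin.sum_univ_three, degE, expo_apply]

theorem mon_eq (c : ℂ) (e : Fin 3 → ℕ) : mon c e = monomial (expo e) c := mon_eq_monomial c e

theorem eval_zero_pderiv_mon (c : ℂ) {e : Fin 3 → ℕ} (he : 2 ≤ degE e) (j : Fin 3) :
    eval 0 (pderiv j (mon c e)) = 0 := by
  rw [mon_eq, pderiv_monomial, eval_monomial]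
  have hd : expo e - Finsupp.single j 1 ≠ 0 := by
    intro h
    have h1 := Finsupp.degree_mono (tsub_eq_zero_iff_le.mp h)
    rw [degree_expo, Finsupp.degree_single] at h1
    omega
  obtain ⟨k, hk⟩ := Finsupp.ne_iff.mp hd
  rw [Finsupp.prod, Finset.prod_eq_zero (i := k) (Finsupp.mem_support_iff.mpr hk), mul_zero]
  rw [Pi.zero_apply, zero_pow hk]

theorem coeff_sum_mul_pderiv (f : Fin 3 → MvPolynomial (Fin 3) ℂ) (b m : Fin 3 →₀ ℕ) (c : ℂ) :
    coeff m (∑ j, f j * pderiv j (monomial b c)) =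
      ∑ j, if b - Finsupp.single j 1 ≤ m then
        coeff (m - (b - Finsupp.single j 1)) (f j) * (c * b j) else 0 := by
  rw [coeff_sum]
  exact Finset.sum_congr rfl fun j _ => by rw [pderiv_monomial, coeff_mul_monomial']

/-- A monomial of the derivative of `z ^ b` along `f` comes from a monomial of `f`. -/
theorem exists_of_coeff_sum_mul_pderiv_ne_zero {f : Fin 3 → MvPolynomial (Fin 3) ℂ}
    {b m : Fin 3 →₀ ℕ} {c : ℂ} (h : coeff m (∑ j, f j * pderiv j (monomial b c)) ≠ 0) :
    ∃ j n, coeff n (f j) ≠ 0 ∧ m + Finsupp.single j 1 = n + b := by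
  rw [coeff_sum_mul_pderiv] at h
  obtain ⟨j, -, hj⟩ := Finset.exists_ne_zero_of_sum_ne_zero h
  split_ifs at hj with hle
  · refine ⟨j, m - (b - Finsupp.single j 1), left_ne_zero_of_mul hj, ?_⟩
    have hb : (b j : ℂ) ≠ 0 := right_ne_zero_of_mul (right_ne_zero_of_mul hj)
    have hb' : Finsupp.single j 1 ≤ b := by
      rw [Finsupp.single_le_iff]
      exact Nat.one_le_iff_ne_zero.mpr (by exact_mod_cast hb)
    calc m + Finsupp.single j 1
        = m - (b - Finsupp.single j 1) + (b - Finsupp.single j 1) + Finsupp.single j 1 := by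
          rw [tsub_add_cancel_of_le hle]
      _ = _ := by rw [add_assoc, tsub_add_cancel_of_le hb']
  · exact absurd rfl hj

/-- The vector field `F`, `G` has the normal form with linear part `N` and further parameters
`e₀`, `e₁`, `n`, `γ`, `κ`. -/
structure IsNormalForm (x : Fin 3 → MvPolynomial (Fin 3) ℂ) (F : Fin 3 → MvPolynomial (Fin 4) ℂ)
    (G : MvPolynomial (Fin 4) ℂ) (N : Fin 3 → Fin 3 → ℂ) (e₀ e₁ : ℂ) (n γ κ : ℝ) : Prop where
  skew : ∀ i j, i ≠ j → N i j = -(starRingEnd ℂ) (N (sw j) (sw i))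
  diag : ∀ i, N i i + (starRingEnd ℂ) (N (sw i) (sw i)) = κ
  push : ∀ z w i, pushField x F z w i = (if i = 0 then e₀ + e₁ * w else 0) +
    ∑ j, N i j * eval z (x j) + n * w * eval z (x i) +
      2 * I * (starRingEnd ℂ) e₁ * eval z (x 1) * eval z (x i)
  last : ∀ z w, eval (Fin.snoc z w : Fin 4 → ℂ) G = γ + κ * w + n * w ^ 2 +
    2 * I * ((starRingEnd ℂ) e₀ + (starRingEnd ℂ) e₁ * w) * eval z (x 1)

theorem eval_zero_monomials (hM : (expMatrix e).det ≠ 0) :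
    (fun i => eval 0 (monomials c e i)) = 0 := by
  funext i
  rw [monomials, eval_mon_zero _ (exponent_ne_zero hM i), Pi.zero_apply]

theorem pushField_zero {i : Fin 3} (hi : 2 ≤ degE (e i)) (F : Fin 3 → MvPolynomial (Fin 4) ℂ)
    (w : ℂ) : pushField (monomials c e) F 0 w i = 0 :=
  Finset.sum_eq_zero fun j _ => by rw [monomials, eval_zero_pderiv_mon _ hi, mul_zero]

theorem IsInfCR.exists_isNormalForm (hc : ∀ i, c i ≠ 0) (hM : (expMatrix e).det ≠ 0)
    (h1 : 2 ≤ degE (e 1)) (h2 : 2 ≤ degE (e 2))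
    {F : Fin 3 → MvPolynomial (Fin 4) ℂ} {G : MvPolynomial (Fin 4) ℂ}
    (h : IsInfCR (monomials c e 0) (monomials c e 1) (monomials c e 2) F G) :
    ∃ N e₀ e₁ n γ κ, IsNormalForm (monomials c e) F G N e₀ e₁ n γ κ := by
  obtain ⟨h', G', hF, hG, H⟩ := h.exists_quadricField hc hM
  have hconst : ∀ i w, 2 ≤ degE (e i) → fieldConst h' w i = 0 := by
    intro i w hi
    have := hF 0 w i
    rw [pushField_zero hi, eval_zero_monomials hM] at this
    exact this.symm
  obtain ⟨N, e₀, e₁, n, γ, κ, hs, hd, hp, hl⟩ :=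
    H.normalForm (fun w => hconst 1 w h1) (fun w => hconst 2 w h2)
  exact ⟨N, e₀, e₁, n, γ, κ, hs, hd, fun z w i => by rw [hF, hp], fun z w => by rw [hG, hl]⟩

/-- Restriction of a polynomial to `w = 0`. -/
def restrict (F : MvPolynomial (Fin 4) ℂ) : MvPolynomial (Fin 3) ℂ :=
  aeval (Fin.snoc X 0 : Fin 4 → MvPolynomial (Fin 3) ℂ) F

theorem eval_restrict (F : MvPolynomial (Fin 4) ℂ) (z : Fin 3 → ℂ) :
    eval z (restrict F) = eval (Fin.snoc z 0 : Fin 4 → ℂ) F := by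
  rw [restrict, aeval_def, eval_eval₂]
  have : (eval z).comp (algebraMap ℂ (MvPolynomial (Fin 3) ℂ)) = RingHom.id ℂ := by
    ext a; simp [algebraMap_eq]
  rw [this, eval₂_id]
  congr 2
  funext i
  induction i using Fin.lastCases with
  | last => rw [Fin.snoc_last, Fin.snoc_last, map_zero]
  | cast i => rw [Fin.snoc_castSucc, Fin.snoc_castSucc, eval_X]

namespace IsNormalForm

variable {F : Fin 3 → MvPolynomial (Fin 4) ℂ} {G : MvPolynomial (Fin 4) ℂ}
  {N : Fin 3 → Fin 3 → ℂ} {e₀ e₁ : ℂ} {n γ κ : ℝ}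

theorem sum_restrict (H : IsNormalForm (monomials c e) F G N e₀ e₁ n γ κ) (i : Fin 3) :
    ∑ j, restrict (F j) * pderiv j (monomial (expo (e i)) (c i)) =
      monomial 0 (if i = 0 then e₀ else 0) + ∑ j, monomial (expo (e j)) (N i j * c j) +
        monomial (expo (e 1) + expo (e i)) (2 * I * (starRingEnd ℂ) e₁ * c 1 * c i) := by
  refine MvPolynomial.funext fun z => ?_
  have h := H.push z 0 i
  simp only [pushField, monomials, mon_eq] at h
  simp only [map_sum, map_mul, eval_restrict, h, map_add]
  simp only [eval_monomial, Finsupp.prod_add_index' (h := fun j k => z j ^ k)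
    (fun j => pow_zero (z j)) (fun j => pow_add (z j)), Finsupp.prod_zero_index, mul_zero, add_zero,
    zero_mul, mul_one, mul_assoc]
  congr 1
  ring

theorem coeff_restrict (H : IsNormalForm (monomials c e) F G N e₀ e₁ n γ κ) (i : Fin 3)
    (m : Fin 3 →₀ ℕ) (h0 : m ≠ 0) (h1 : m ≠ expo (e 1) + expo (e i)) :
    coeff m (∑ j, restrict (F j) * pderiv j (monomial (expo (e i)) (c i))) =
      ∑ j, if expo (e j) = m then N i j * c j else 0 := by
  rw [H.sum_restrict]
  simp only [coeff_add, coeff_sum, coeff_monomial, if_neg h0.symm, if_neg h1.symm, add_zero,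
    zero_add]

theorem expo_injective (hM : (expMatrix e).det ≠ 0) : Function.Injective fun i => expo (e i) := by
  intro i j hij
  by_contra hne
  refine hM (Matrix.det_zero_of_row_eq hne ?_)
  funext k
  have := DFunLike.congr_fun hij k
  simp only [expo_apply] at this
  simp [expMatrix, this]

theorem expo_ne_zero (hM : (expMatrix e).det ≠ 0) (i : Fin 3) : expo (e i) ≠ 0 := fun h =>
  exponent_ne_zero hM i (funext fun k => DFunLike.congr_fun h k)

theorem degE_pos (hM : (expMatrix e).det ≠ 0) (i : Fin 3) : 0 < degE (e i) := by
  rw [← degree_expo, Nat.pos_iff_ne_zero, Ne, Finsupp.degree_eq_zero_iff]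
  exact expo_ne_zero hM i

theorem coeff_restrict_expo (hM : (expMatrix e).det ≠ 0)
    (H : IsNormalForm (monomials c e) F G N e₀ e₁ n γ κ) (i k : Fin 3)
    (h1 : degE (e k) < degE (e 1) + degE (e i)) :
    coeff (expo (e k)) (∑ j, restrict (F j) * pderiv j (monomial (expo (e i)) (c i))) =
      N i k * c k := by
  rw [H.coeff_restrict i _ (expo_ne_zero hM k)]
  · rw [Finset.sum_eq_single k (fun j _ hj => if_neg fun h => hj (expo_injective hM h)) (by simp),
      if_pos rfl]
  · intro h
    have := congrArg Finsupp.degree h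
    rw [map_add, degree_expo, degree_expo, degree_expo] at this
    omega

/-- If the linear part has a nonzero entry, then `F` has a monomial of the corresponding degree. -/
theorem exists_of_ne_zero (hc : ∀ i, c i ≠ 0) (hM : (expMatrix e).det ≠ 0)
    (H : IsNormalForm (monomials c e) F G N e₀ e₁ n γ κ) {i k : Fin 3}
    (h1 : degE (e k) < degE (e 1) + degE (e i)) (hN : N i k ≠ 0) :
    ∃ j m, coeff m (restrict (F j)) ≠ 0 ∧ expo (e k) + Finsupp.single j 1 = m + expo (e i) ∧
      degE (e k) + 1 = m.degree + degE (e i) := by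
  obtain ⟨j, m, hm, hjm⟩ := exists_of_coeff_sum_mul_pderiv_ne_zero
    (show coeff (expo (e k)) (∑ j, restrict (F j) * pderiv j (monomial (expo (e i)) (c i))) ≠ 0 by
      rw [H.coeff_restrict_expo hM i k h1]; exact mul_ne_zero hN (hc k))
  refine ⟨j, m, hm, hjm, ?_⟩
  have := congrArg Finsupp.degree hjm
  rwa [map_add, map_add, degree_expo, degree_expo, Finsupp.degree_single] at this

theorem linear_one_zero_eq_zero (hc : ∀ i, c i ≠ 0) (hM : (expMatrix e).det ≠ 0)
    (hd : degE (e 0) + degE (e 1) = 2 * degE (e 2)) (hlt : degE (e 0) < degE (e 1))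
    (H : IsNormalForm (monomials c e) F G N e₀ e₁ n γ κ) : N 1 0 = 0 := by
  by_contra hN
  obtain ⟨-, m, -, -, h⟩ := H.exists_of_ne_zero hc hM (by omega) hN
  omega

theorem linear_one_two_eq_zero (hc : ∀ i, c i ≠ 0) (hM : (expMatrix e).det ≠ 0)
    (hd : degE (e 0) + degE (e 1) = 2 * degE (e 2)) (hlt : degE (e 0) < degE (e 1))
    (H : IsNormalForm (monomials c e) F G N e₀ e₁ n γ κ) : N 1 2 = 0 := by
  by_contra hN
  have hN' : N 2 0 ≠ 0 := by
    rw [H.skew 2 0 (by decide)]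
    simpa [sw] using hN
  have hp := degE_pos hM 0
  obtain ⟨j, m, -, hj, hdj⟩ := H.exists_of_ne_zero hc hM (by omega) hN
  obtain ⟨i, m', hi, hi', hdi⟩ := H.exists_of_ne_zero hc hM (by omega) hN'
  obtain rfl : m = 0 := by rw [← Finsupp.degree_eq_zero_iff]; omega
  obtain rfl : m' = 0 := by rw [← Finsupp.degree_eq_zero_iff]; omega
  rw [zero_add] at hj hi'
  by_cases hij : i = j
  · subst hij
    refine hM ?_
    have hk : ∀ k, (e 1 k : ℂ) = 2 * e 2 k - e 0 k := by
      intro k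
      have h1 := DFunLike.congr_fun hj k
      have h2 := DFunLike.congr_fun hi' k
      simp only [Finsupp.add_apply, expo_apply] at h1 h2
      rw [eq_sub_iff_add_eq]
      norm_cast
      omega
    simp only [expMatrix, Matrix.det_fin_three, Matrix.of_apply, hk]
    ring
  · have hsub : expo (e 1) = expo (e 0) + Finsupp.single j 1 + Finsupp.single i 1 := by
      rw [← hj, ← hi']; abel
    have hdm : (expo (e 0) + Finsupp.single j 1).degree = degE (e 0) + 1 := by
      rw [map_add, degree_expo, Finsupp.degree_single]
    have hne : ∀ m, m.degree ≠ degE (e 0) + 1 → expo (e 0) + Finsupp.single j 1 ≠ m :=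
      fun m hm h => hm (by rw [← h, hdm])
    have hcoeff := H.coeff_restrict 1 (expo (e 0) + Finsupp.single j 1)
      (hne _ (by rw [map_zero]; omega))
      (hne _ (by rw [map_add, degree_expo]; omega))
    have hz : (∑ k, if expo (e k) = expo (e 0) + Finsupp.single j 1 then N 1 k * c k else 0) =
        0 := by
      refine Finset.sum_eq_zero fun k _ => if_neg fun h => ?_
      fin_cases k
      · exact hne _ (by rw [degree_expo]; simp) h.symm
      · exact hne _ (by rw [degree_expo]; simp; omega) h.symm
      · change expo (e 2) = _ at h
        rw [← hi', add_right_inj, Finsupp.single_left_inj one_ne_zero] at h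
        exact hij h
    rw [hz, coeff_sum_mul_pderiv, Finset.sum_eq_single i] at hcoeff
    · rw [hsub, add_tsub_cancel_right, if_pos le_rfl, tsub_self] at hcoeff
      refine mul_ne_zero hi (mul_ne_zero (hc 1) ?_) hcoeff
      simp only [Finsupp.add_apply, Finsupp.single_eq_same]
      exact Nat.cast_ne_zero.mpr (Nat.succ_ne_zero _)
    · intro k _ hki
      refine if_neg fun hle => ?_
      have := hle i
      rw [hsub] at this
      simp [Finsupp.single_apply, hki.symm] at this
    · simp

end IsNormalForm

/-! ### Comparison with the parameter space -/

theorem pushField_eq_mul_sum (F : Fin 3 → MvPolynomial (Fin 4) ℂ) {z : Fin 3 → ℂ} (w : ℂ)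
    {y : Fin 3 → ℂ} (hy : ∀ j, eval (Fin.snoc z w : Fin 4 → ℂ) (F j) = z j * y j) (i : Fin 3) :
    pushField (monomials c e) F z w i =
      eval z (monomials c e i) * (expMatrix e).mulVec y i := by
  simp only [pushField, Matrix.mulVec, dotProduct, Finset.mul_sum, expMatrix, Matrix.of_apply]
  refine Finset.sum_congr rfl fun j _ => ?_
  have := eval_mul_pderiv_mon (c i) (e i) j z
  rw [hy, monomials]
  linear_combination y j * this

theorem eq_zero_of_pushField_eq_zero (hc : ∀ i, c i ≠ 0) (hM : (expMatrix e).det ≠ 0)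
    {F : Fin 3 → MvPolynomial (Fin 4) ℂ}
    (h : ∀ z w i, pushField (monomials c e) F z w i = 0) : F = 0 := by
  have key : ∀ (w : ℂ) (j : Fin 3),
      (fun z : Fin 3 → ℂ => eval (Fin.snoc z w : Fin 4 → ℂ) (F j)) = fun _ => 0 := by
    intro w j
    refine Continuous.ext_on dense_torus (continuous_eval_snoc continuous_id continuous_const _)
      continuous_const fun z hz => ?_
    set y : Fin 3 → ℂ := fun j => eval (Fin.snoc z w : Fin 4 → ℂ) (F j) / z j with hy
    have hz' : ∀ j, eval (Fin.snoc z w : Fin 4 → ℂ) (F j) = z j * y j := fun j => by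
      rw [hy, mul_div_cancel₀ _ (hz j)]
    have hy0 : y = 0 := by
      refine Matrix.eq_zero_of_mulVec_eq_zero hM (funext fun i => ?_)
      have := h z w i
      rw [pushField_eq_mul_sum F w hz'] at this
      exact (mul_eq_zero.mp this).resolve_left (eval_mon_ne_zero (hc i) _ hz)
    simp only [hz' j, hy0, Pi.zero_apply, mul_zero]
  funext j
  refine MvPolynomial.funext fun v => ?_
  have := congrFun (key (v (Fin.last 3)) j) (Fin.init v)
  rw [Fin.snoc_init_self] at this
  simpa using this

theorem eval_real_smul {σ : Type*} (t : ℝ) (p : MvPolynomial σ ℂ) (v : σ → ℂ) :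
    eval v (t • p) = t * eval v p := by
  rw [← Complex.coe_smul, smul_eval]

/-- The space of functions in which vector fields are compared. -/
abbrev FieldValues : Type := ((Fin 3 → ℂ) → ℂ → Fin 3 → ℂ) × ((Fin 3 → ℂ) → ℂ → ℂ)

/-- The real linear map sending a vector field to its image under the monomial map. -/
def fieldValues (x : Fin 3 → MvPolynomial (Fin 3) ℂ) :
    ((Fin 3 → MvPolynomial (Fin 4) ℂ) × MvPolynomial (Fin 4) ℂ) →ₗ[ℝ] FieldValues where
  toFun A := (pushField x A.1, fun z w => eval (Fin.snoc z w : Fin 4 → ℂ) A.2)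
  map_add' A B := by
    refine Prod.ext ?_ ?_
    · funext z w i
      simp [pushField, add_mul, Finset.sum_add_distrib]
    · funext z w
      simp
  map_smul' t A := by
    refine Prod.ext ?_ ?_
    · funext z w i
      simp [pushField, eval_real_smul, Finset.mul_sum, mul_assoc]
    · funext z w
      simp [eval_real_smul]

theorem fieldValues_injective (hc : ∀ i, c i ≠ 0) (hM : (expMatrix e).det ≠ 0) :
    Function.Injective (fieldValues (monomials c e)) := by
  rw [← LinearMap.ker_eq_bot, LinearMap.ker_eq_bot']
  rintro ⟨F, G⟩ h
  have h1 := congrArg Prod.fst h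
  have h2 := congrArg Prod.snd h
  refine Prod.ext (eq_zero_of_pushField_eq_zero hc hM fun z w i => ?_)
    (MvPolynomial.funext fun v => ?_)
  · exact congrFun (congrFun (congrFun h1 z) w) i
  · have := congrFun (congrFun h2 (Fin.init v)) (v (Fin.last 3))
    simp only [fieldValues, LinearMap.coe_mk, AddHom.coe_mk, Fin.snoc_init_self] at this
    simpa using this

/-- The parameters `(e₀, e₁, α, δ)` and `(n, γ, κ, θ, β)` of an infinitesimal automorphism. -/
abbrev Params : Type := (Fin 4 → ℂ) × (Fin 5 → ℝ)

/-- The linear part with given parameters. -/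
def linPart (v : Params) : Fin 3 → Fin 3 → ℂ :=
  ![![v.1 2, I * v.2 4, v.1 3],
    ![0, v.2 2 - (starRingEnd ℂ) (v.1 2), 0],
    ![0, -(starRingEnd ℂ) (v.1 3), v.2 2 / 2 + I * v.2 3]]

/-- The field in normal form with given parameters. -/
def paramField (x : Fin 3 → MvPolynomial (Fin 3) ℂ) : Params →ₗ[ℝ] FieldValues where
  toFun v :=
    (fun z w i => (if i = 0 then v.1 0 + v.1 1 * w else 0) + ∑ j, linPart v i j * eval z (x j) +
      v.2 0 * w * eval z (x i) + 2 * I * (starRingEnd ℂ) (v.1 1) * eval z (x 1) * eval z (x i),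
    fun z w => v.2 1 + v.2 2 * w + v.2 0 * w ^ 2 +
      2 * I * ((starRingEnd ℂ) (v.1 0) + (starRingEnd ℂ) (v.1 1) * w) * eval z (x 1))
  map_add' u v := by
    refine Prod.ext ?_ ?_
    · funext z w i
      fin_cases i <;> simp [Fin.sum_univ_three, linPart] <;> ring
    · funext z w
      simp
      ring
  map_smul' t v := by
    refine Prod.ext ?_ ?_
    · funext z w i
      fin_cases i <;> simp [Fin.sum_univ_three, linPart] <;> ring
    · funext z w
      simp
      ring

/-- The field has the normal form with parameters `v`. -/
abbrev HasParams (x : Fin 3 → MvPolynomial (Fin 3) ℂ) (F : Fin 3 → MvPolynomial (Fin 4) ℂ)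
    (G : MvPolynomial (Fin 4) ℂ) (v : Params) : Prop :=
  IsNormalForm x F G (linPart v) (v.1 0) (v.1 1) (v.2 0) (v.2 1) (v.2 2)

theorem linPart_skew (v : Params) (i j : Fin 3) (h : i ≠ j) :
    linPart v i j = -(starRingEnd ℂ) (linPart v (sw j) (sw i)) := by
  fin_cases i <;> fin_cases j <;> simp [linPart, sw] at h ⊢

theorem linPart_diag (v : Params) (i : Fin 3) :
    linPart v i i + (starRingEnd ℂ) (linPart v (sw i) (sw i)) = (v.2 2 : ℂ) := by
  have h2 : (starRingEnd ℂ) (2 : ℂ) = 2 := map_ofNat _ 2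
  fin_cases i <;> simp [linPart, sw, h2]; ring

theorem hasParams_of_fieldValues_eq {x : Fin 3 → MvPolynomial (Fin 3) ℂ}
    {F : Fin 3 → MvPolynomial (Fin 4) ℂ} {G : MvPolynomial (Fin 4) ℂ} {v : Params}
    (h1 : ∀ z w i, pushField x F z w i = (paramField x v).1 z w i)
    (h2 : ∀ z w, eval (Fin.snoc z w : Fin 4 → ℂ) G = (paramField x v).2 z w) :
    HasParams x F G v :=
  ⟨linPart_skew v, linPart_diag v, h1, h2⟩

theorem HasParams.fieldValues_eq {x : Fin 3 → MvPolynomial (Fin 3) ℂ}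
    {F : Fin 3 → MvPolynomial (Fin 4) ℂ} {G : MvPolynomial (Fin 4) ℂ} {v : Params}
    (h : HasParams x F G v) : fieldValues x (F, G) = paramField x v := by
  refine Prod.ext ?_ ?_
  · funext z w i
    exact h.push z w i
  · funext z w
    exact h.last z w

theorem IsNormalForm.exists_hasParams {x : Fin 3 → MvPolynomial (Fin 3) ℂ}
    {F : Fin 3 → MvPolynomial (Fin 4) ℂ} {G : MvPolynomial (Fin 4) ℂ}
    {N : Fin 3 → Fin 3 → ℂ} {e₀ e₁ : ℂ} {n γ κ : ℝ} (H : IsNormalForm x F G N e₀ e₁ n γ κ)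
    (h10 : N 1 0 = 0) (h12 : N 1 2 = 0) : ∃ v, HasParams x F G v := by
  refine ⟨(![e₀, e₁, N 0 0, N 0 2], ![n, γ, κ, (N 2 2).im, (N 0 1).im]), ?_⟩
  have hN : linPart (![e₀, e₁, N 0 0, N 0 2], ![n, γ, κ, (N 2 2).im, (N 0 1).im]) = N := by
    have h01 := H.skew 0 1 (by decide)
    have h20 := H.skew 2 0 (by decide)
    have h21 := H.skew 2 1 (by decide)
    have h11 := H.diag 1
    have h22 := H.diag 2
    simp only [sw, Matrix.cons_val] at h01 h20 h21 h11 h22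
    have e01 : I * ((N 0 1).im : ℂ) = N 0 1 := by
      have := congrArg re h01
      simp only [neg_re, conj_re] at this
      apply Complex.ext
      · simp; linarith
      · simp
    have e22 : (κ : ℂ) / 2 + I * ((N 2 2).im : ℂ) = N 2 2 := by
      have := congrArg re h22
      simp only [add_re, conj_re, ofReal_re] at this
      apply Complex.ext
      · simp; linarith
      · simp
    rw [h12, map_zero, neg_zero] at h20
    rw [← eq_sub_iff_add_eq] at h11
    funext i j
    fin_cases i <;> fin_cases j <;>
      simp [linPart, e01, e22, h10, h12, h20, h21, h11]
  simpa [HasParams, hN] using H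

theorem paramField_injective (hc : ∀ i, c i ≠ 0) (hM : (expMatrix e).det ≠ 0) :
    Function.Injective (paramField (monomials c e)) := by
  rw [← LinearMap.ker_eq_bot, LinearMap.ker_eq_bot']
  rintro v h
  have h1 : ∀ z w i, (paramField (monomials c e) v).1 z w i = 0 := fun z w i => by rw [h]; rfl
  have h2 : ∀ z w, (paramField (monomials c e) v).2 z w = 0 := fun z w => by rw [h]; rfl
  simp only [paramField, LinearMap.coe_mk, AddHom.coe_mk] at h1 h2
  have h3 : ∀ w : ℂ, (v.2 1 : ℂ) + v.2 2 * w + v.2 0 * w ^ 2 = 0 := by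
    intro w
    have := h2 0 w
    rwa [monomials, eval_mon_zero _ (exponent_ne_zero hM 1), mul_zero, add_zero] at this
  have hγ : (v.2 1 : ℂ) = 0 := by linear_combination h3 0
  have hκ : (v.2 2 : ℂ) = 0 := by linear_combination (h3 1 - h3 (-1)) / 2
  have hn : (v.2 0 : ℂ) = 0 := by linear_combination (h3 1 + h3 (-1)) / 2 - h3 0
  have hval : ∀ y : Fin 3 → ℂ, (∀ i, y i ≠ 0) → (∀ w,
      2 * I * ((starRingEnd ℂ) (v.1 0) + (starRingEnd ℂ) (v.1 1) * w) * y 1 = 0) ∧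
      ∀ i, (if i = 0 then v.1 0 else 0) + ∑ j, linPart v i j * y j +
        2 * I * (starRingEnd ℂ) (v.1 1) * y 1 * y i = 0 := by
    intro y hy
    obtain ⟨z, rfl⟩ := exists_eval_monomials_eq hc hM hy
    refine ⟨fun w => ?_, fun i => ?_⟩
    · have := h2 z w
      rw [hγ, hκ, hn] at this
      linear_combination this
    · have := h1 z 0 i
      simpa using this
  have he : ∀ w : ℂ, (starRingEnd ℂ) (v.1 0) + (starRingEnd ℂ) (v.1 1) * w = 0 := by
    intro w
    simpa using (hval 1 (by simp)).1 w
  have he0 : v.1 0 = 0 := by simpa using he 0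
  have he1 : v.1 1 = 0 := by simpa [he0] using he 1
  have ha := (hval ![1, 1, 1] (fun i => by fin_cases i <;> simp)).2
  have hb := (hval ![2, 1, 1] (fun i => by fin_cases i <;> simp)).2 0
  have hd := (hval ![1, 1, 2] (fun i => by fin_cases i <;> simp)).2 0
  have ha0 := ha 0
  have ha2 := ha 2
  simp only [he0, he1, Fin.sum_univ_three, linPart, hκ, Matrix.cons_val, map_zero, mul_zero,
    zero_mul, ite_self, add_zero, zero_add, mul_one, zero_div] at ha0 ha2 hb hd
  have hα : v.1 2 = 0 := by linear_combination hb - ha0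
  have hδ : v.1 3 = 0 := by linear_combination hd - ha0
  have hβ : I * (v.2 4 : ℂ) = 0 := by linear_combination ha0 - hα - hδ
  have hθ : I * (v.2 3 : ℂ) = 0 := by
    rw [hδ] at ha2
    simpa using ha2
  have hβ_re : v.2 4 = 0 := by simpa using hβ
  have hθ_re : v.2 3 = 0 := by simpa using hθ
  refine Prod.ext (funext fun i => ?_) (funext fun i => ?_)
  · fin_cases i
    exacts [he0, he1, hα, hδ]
  · fin_cases i
    exacts [ofReal_eq_zero.mp hn, ofReal_eq_zero.mp hγ, ofReal_eq_zero.mp hκ, hθ_re, hβ_re]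

/-- A field in normal form is an infinitesimal automorphism. -/
theorem IsNormalForm.isInfCR {x : Fin 3 → MvPolynomial (Fin 3) ℂ}
    {F : Fin 3 → MvPolynomial (Fin 4) ℂ} {G : MvPolynomial (Fin 4) ℂ}
    {N : Fin 3 → Fin 3 → ℂ} {e₀ e₁ : ℂ} {n γ κ : ℝ} (H : IsNormalForm x F G N e₀ e₁ n γ κ) :
    IsInfCR (x 0) (x 1) (x 2) F G := by
  intro z u
  have hsum : ∀ w, ∑ j, eval (Fin.snoc z w : Fin 4 → ℂ) (F j) * PhiD (x 0) (x 1) (x 2) j z =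
      ∑ i, pushField x F z w i * (starRingEnd ℂ) (eval z (x (sw i))) := by
    intro w
    simp only [pushField, PhiD, Fin.sum_univ_three, sw, Matrix.cons_val]
    ring
  rw [hsum, H.last]
  simp only [H.push, Fin.sum_univ_three, sw, Matrix.cons_val, if_true, one_ne_zero, if_false,
    show (2 : Fin 3) ≠ 0 by decide, zero_add]
  have hskew : ∀ i j, i ≠ j → (starRingEnd ℂ) (N i j) = -N (sw j) (sw i) := fun i j hij => by
    rw [H.skew (sw j) (sw i) fun h => hij (by rw [← sw_sw i, ← sw_sw j, h]), sw_sw, sw_sw, neg_neg]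
  have hdiag : ∀ i, (starRingEnd ℂ) (N i i) = κ - N (sw i) (sw i) := fun i => by
    rw [eq_sub_iff_add_eq', ← H.diag (sw i), sw_sw]
  have h00 := hdiag 0
  have h11 := hdiag 1
  have h22 := hdiag 2
  have h01 := hskew 0 1 (by decide)
  have h02 := hskew 0 2 (by decide)
  have h10 := hskew 1 0 (by decide)
  have h12 := hskew 1 2 (by decide)
  have h20 := hskew 2 0 (by decide)
  have h21 := hskew 2 1 (by decide)
  simp only [sw, Matrix.cons_val] at h00 h11 h22 h01 h02 h10 h12 h20 h21
  set w : ℂ := (u : ℂ) + I * Phi (x 0) (x 1) (x 2) z with hw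
  simp only [Phi] at hw
  clear_value w
  generalize eval z (x 0) = p at *
  generalize eval z (x 1) = q at *
  generalize eval z (x 2) = r at *
  have hd : w - (starRingEnd ℂ) w = 2 * I *
      (p * (starRingEnd ℂ) q + q * (starRingEnd ℂ) p + r * (starRingEnd ℂ) r) := by
    rw [hw]
    simp only [map_add, map_mul, conj_ofReal, conj_I, conj_conj]
    ring
  have hc2 : (starRingEnd ℂ) (2 : ℂ) = 2 := map_ofNat _ 2
  obtain ⟨J, hJ⟩ : ∃ J : ℂ, J = (2 * I)⁻¹ := ⟨_, rfl⟩
  have hJI : 2 * I * J = 1 := by rw [hJ]; exact mul_inv_cancel₀ (by simp)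
  have hJc : (starRingEnd ℂ) J = -J := by
    rw [hJ, map_inv₀, map_mul, hc2, conj_I, mul_neg, inv_neg]
  have hre : ∀ A : ℂ, A + (starRingEnd ℂ) A = 0 → A.re = 0 := by
    intro A hA
    have := congrArg re hA
    simp only [add_re, conj_re, zero_re] at this
    linarith
  apply hre
  rw [div_eq_mul_inv, ← hJ]
  simp only [map_sub, map_add, map_mul, map_pow, conj_ofReal, conj_I, conj_conj, hc2, hJc, h00,
    h11, h22, h01, h02, h10, h12, h20, h21]
  generalize (starRingEnd ℂ) w = w' at *
  generalize (starRingEnd ℂ) p = p' at *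
  generalize (starRingEnd ℂ) q = q' at *
  generalize (starRingEnd ℂ) r = r' at *
  generalize (starRingEnd ℂ) e₀ = e₀' at *
  generalize (starRingEnd ℂ) e₁ = e₁' at *
  linear_combination (κ * J + n * (w + w') * J + e₁' * q - e₁ * q') * hd +
    ((κ + n * (w + w')) * (p * q' + q * p' + r * r') + (e₀' + e₁' * w) * q +
      (e₀ + e₁ * w') * q') * hJI

/-! ### Dimension bounds -/

theorem rank_params : Module.rank ℝ Params = 13 := by
  rw [← Module.finrank_eq_rank, Module.finrank_prod, Module.finrank_pi_fintype]
  simp [Complex.finrank_real_complex]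

theorem rank_span_gSet_le (hc : ∀ i, c i ≠ 0) (hM : (expMatrix e).det ≠ 0)
    (hd : degE (e 0) + degE (e 1) = 2 * degE (e 2)) (h2 : 2 ≤ degE (e 2))
    (hlt : degE (e 0) < degE (e 1)) :
    Module.rank ℝ (Submodule.span ℝ
      (gSet (monomials c e 0) (monomials c e 1) (monomials c e 2))) ≤ 13 := by
  rw [(Submodule.equivMapOfInjective _ (fieldValues_injective hc hM) _).rank_eq, ← rank_params]
  refine le_trans (Submodule.rank_mono (t := LinearMap.range (paramField (monomials c e))) ?_)
    (rank_range_le _)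
  rw [Submodule.map_span, Submodule.span_le]
  rintro _ ⟨⟨F, G⟩, hFG, rfl⟩
  obtain ⟨N, e₀, e₁, n, γ, κ, H⟩ := IsInfCR.exists_isNormalForm hc hM (by omega) h2 hFG
  obtain ⟨v, hv⟩ := H.exists_hasParams (H.linear_one_zero_eq_zero hc hM hd hlt)
    (H.linear_one_two_eq_zero hc hM hd hlt)
  exact ⟨v, hv.fieldValues_eq.symm⟩

theorem rank_le_rank_of_injective {V W W' : Type} [AddCommGroup V] [Module ℝ V] [AddCommGroup W]
    [Module ℝ W] [AddCommGroup W'] [Module ℝ W'] {S : Submodule ℝ W'} (J : W' →ₗ[ℝ] W)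
    (T : V →ₗ[ℝ] W) (hT : Function.Injective T) (h : ∀ v, T v ∈ S.map J) :
    Module.rank ℝ V ≤ Module.rank ℝ S :=
  (LinearMap.rank_le_of_injective (T.codRestrict _ h)
    fun _ _ huv => hT (congrArg Subtype.val huv)).trans (rank_map_le J S)

theorem HasParams.mem_map {F : Fin 3 → MvPolynomial (Fin 4) ℂ} {G : MvPolynomial (Fin 4) ℂ}
    {x : Fin 3 → MvPolynomial (Fin 3) ℂ} {v : Params} (h : HasParams x F G v) :
    paramField x v ∈ (Submodule.span ℝ (gSet (x 0) (x 1) (x 2))).map (fieldValues x) :=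
  ⟨(F, G), Submodule.subset_span h.isInfCR, h.fieldValues_eq⟩

/-- A rigid field on `ℂ³`, regarded as a field on `ℂ⁴`. -/
def rigid (f : Fin 3 → MvPolynomial (Fin 3) ℂ) (j : Fin 3) : MvPolynomial (Fin 4) ℂ :=
  rename Fin.castSucc (f j)

theorem eval_rigid (f : Fin 3 → MvPolynomial (Fin 3) ℂ) (j : Fin 3) (z : Fin 3 → ℂ) (w : ℂ) :
    eval (Fin.snoc z w : Fin 4 → ℂ) (rigid f j) = eval z (f j) := by
  rw [rigid, eval_rename]
  congr 2
  funext i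
  rw [Function.comp_apply, Fin.snoc_castSucc]

theorem restrict_rigid (f : Fin 3 → MvPolynomial (Fin 3) ℂ) (j : Fin 3) :
    restrict (rigid f j) = f j :=
  MvPolynomial.funext fun z => by rw [eval_restrict, eval_rigid]

theorem isInfCR_rigid {P Q R : MvPolynomial (Fin 3) ℂ} {d : ℕ}
    {f : Fin 3 → MvPolynomial (Fin 3) ℂ} (hf : f ∈ gcSet P Q R d) :
    IsInfCR P Q R (rigid f) 0 := by
  intro z u
  simp only [eval_rigid, map_zero, zero_div, zero_sub, neg_re, neg_eq_zero]
  exact hf.2 z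

theorem two_le_degree_of_mem_gcSet {P Q R : MvPolynomial (Fin 3) ℂ} {d : ℕ}
    {f : Fin 3 → MvPolynomial (Fin 3) ℂ} (hf : f ∈ gcSet P Q R d) {j : Fin 3} {m : Fin 3 →₀ ℕ}
    (hm : coeff m (f j) ≠ 0) : 2 ≤ m.degree :=
  (hf.1 j m (mem_support_iff.mpr hm)).1

theorem exists_mem_ne_zero_of_rank_span_pos {W : Type*} [AddCommGroup W] [Module ℝ W] {s : Set W}
    (h : 0 < Module.rank ℝ (Submodule.span ℝ s)) : ∃ f ∈ s, f ≠ 0 := by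
  by_contra! hs
  rw [Submodule.span_eq_bot.mpr hs, rank_bot] at h
  exact lt_irrefl _ h

theorem degE_ne_of_mem_gcSet (hc : ∀ i, c i ≠ 0) (hM : (expMatrix e).det ≠ 0)
    (hd : degE (e 0) + degE (e 1) = 2 * degE (e 2)) (h2 : 2 ≤ degE (e 2)) {d : ℕ}
    {f : Fin 3 → MvPolynomial (Fin 3) ℂ}
    (hf : f ∈ gcSet (monomials c e 0) (monomials c e 1) (monomials c e 2) d) (hf0 : f ≠ 0) :
    degE (e 0) ≠ degE (e 1) := by
  intro heq
  obtain ⟨N, e₀, e₁, n, γ, κ, H⟩ :=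
    (isInfCR_rigid hf).exists_isNormalForm hc hM (by omega) h2
  have hdeg : ∀ i, degE (e i) = degE (e 2) := by
    intro i
    fin_cases i <;> simp <;> omega
  have hN : ∀ i k, N i k = 0 := by
    intro i k
    by_contra hne
    have hi := hdeg i
    have hk := hdeg k
    obtain ⟨j, m, hm, -, h⟩ := H.exists_of_ne_zero hc hM (by omega) hne
    rw [restrict_rigid] at hm
    have := two_le_degree_of_mem_gcSet hf hm
    omega
  have he : ∀ w, e₀ + e₁ * w = 0 := by
    intro w
    have hx : ∀ i, eval 0 (monomials c e i) = 0 := congrFun (eval_zero_monomials hM)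
    have := H.push 0 w 0
    rw [pushField_zero (by omega)] at this
    simp only [hx, mul_zero, Finset.sum_const_zero, add_zero, if_true] at this
    exact this.symm
  have he0 : e₀ = 0 := by simpa using he 0
  have he1 : e₁ = 0 := by simpa [he0] using he 1
  have hF : rigid f = 0 := by
    refine eq_zero_of_pushField_eq_zero hc hM fun z w i => ?_
    have : pushField (monomials c e) (rigid f) z w i =
        pushField (monomials c e) (rigid f) z 0 i := by
      simp only [pushField, eval_rigid]
    rw [this, H.push]
    simp [hN, he0, he1]
  refine hf0 (funext fun j => ?_)
  rw [← restrict_rigid f j, hF, Pi.zero_apply, restrict, map_zero, Pi.zero_apply]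

/-- The parameters of the fields which are diagonal in the coordinates `z`. -/
def diagParams : (ℂ × (Fin 4 → ℝ)) →ₗ[ℝ] Params where
  toFun u := (![0, 0, u.1, 0], ![u.2 0, u.2 1, u.2 2, u.2 3, 0])
  map_add' u v := by
    refine Prod.ext ?_ ?_ <;> funext i <;> fin_cases i <;> simp
  map_smul' t v := by
    refine Prod.ext ?_ ?_ <;> funext i <;> fin_cases i <;> simp

theorem diagParams_injective : Function.Injective diagParams := by
  rw [← LinearMap.ker_eq_bot, LinearMap.ker_eq_bot']
  intro u hu
  have h1 := congrArg Prod.fst hu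
  have h2 := congrArg Prod.snd hu
  refine Prod.ext (congrFun h1 2) (funext fun i => ?_)
  fin_cases i
  exacts [congrFun h2 0, congrFun h2 1, congrFun h2 2, congrFun h2 3]

theorem exists_hasParams_diagParams (hM : (expMatrix e).det ≠ 0) (u : ℂ × (Fin 4 → ℝ)) :
    ∃ (F : Fin 3 → MvPolynomial (Fin 4) ℂ) (G : MvPolynomial (Fin 4) ℂ) (y : Fin 3 → ℂ),
      HasParams (monomials c e) F G (diagParams u) ∧
      ∀ z j, eval (Fin.snoc z 0 : Fin 4 → ℂ) (F j) = z j * y j := by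
  set y := (expMatrix e)⁻¹.mulVec fun i => linPart (diagParams u) i i with hy
  set s := (expMatrix e)⁻¹.mulVec fun _ => (1 : ℂ) with hs
  have hinv : ∀ b, (expMatrix e).mulVec ((expMatrix e)⁻¹.mulVec b) = b := fun b => by
    rw [Matrix.mulVec_mulVec, Matrix.mul_nonsing_inv _ (isUnit_iff_ne_zero.mpr hM),
      Matrix.one_mulVec]
  set F : Fin 3 → MvPolynomial (Fin 4) ℂ := fun j =>
    X j.castSucc * (C (y j) + C (u.2 0 * s j) * X (Fin.last 3)) with hF
  have hFe : ∀ z w j, eval (Fin.snoc z w : Fin 4 → ℂ) (F j) =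
      z j * (y + (u.2 0 * w) • s) j := by
    intro z w j
    simp only [hF, map_mul, map_add, eval_X, eval_C, Fin.snoc_castSucc, Fin.snoc_last,
      Pi.add_apply, Pi.smul_apply, smul_eq_mul]
    ring
  refine ⟨F, C (u.2 1 : ℂ) + C (u.2 2 : ℂ) * X (Fin.last 3) + C (u.2 0 : ℂ) * X (Fin.last 3) ^ 2, y,
    hasParams_of_fieldValues_eq (fun z w i => ?_) fun z w => ?_, fun z j => ?_⟩
  · rw [pushField_eq_mul_sum F w (hFe z w), Matrix.mulVec_add, Matrix.mulVec_smul, hy, hs, hinv,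
      hinv]
    fin_cases i <;> simp [paramField, diagParams, linPart, Fin.sum_univ_three] <;> ring
  · simp only [map_add, map_mul, map_pow, eval_C, eval_X, Fin.snoc_last]
    simp [paramField, diagParams]
  · rw [hFe]
    simp

theorem seven_le_rank_span_gSet (hc : ∀ i, c i ≠ 0) (hM : (expMatrix e).det ≠ 0) {d : ℕ}
    {f : Fin 3 → MvPolynomial (Fin 3) ℂ}
    (hf : f ∈ gcSet (monomials c e 0) (monomials c e 1) (monomials c e 2) d) (hf0 : f ≠ 0) :
    7 ≤ Module.rank ℝ (Submodule.span ℝ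
      (gSet (monomials c e 0) (monomials c e 1) (monomials c e 2))) := by
  set x := monomials c e with hx
  have hrank : Module.rank ℝ ((ℂ × (Fin 4 → ℝ)) × ℝ) = 7 := by
    rw [← Module.finrank_eq_rank, Module.finrank_prod, Module.finrank_prod]
    simp [Complex.finrank_real_complex]
  rw [← hrank]
  refine rank_le_rank_of_injective (fieldValues x)
    (((paramField x).comp diagParams).coprod
      (LinearMap.toSpanSingleton ℝ _ (fieldValues x (rigid f, 0)))) ?_ ?_
  · rw [← LinearMap.ker_eq_bot, LinearMap.ker_eq_bot']
    rintro ⟨u, t⟩ h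
    simp only [LinearMap.coprod_apply, LinearMap.comp_apply, LinearMap.toSpanSingleton_apply] at h
    obtain ⟨F, G, y, hFG, hF⟩ := exists_hasParams_diagParams (c := c) hM u
    have ht : t = 0 := by
      rw [← hFG.fieldValues_eq, ← map_smul, ← map_add] at h
      have h0 := fieldValues_injective hc hM (h.trans (map_zero _).symm)
      have hz : ∀ z j, y j * z j + t * eval z (f j) = 0 := by
        intro z j
        have := congrArg (eval (Fin.snoc z 0 : Fin 4 → ℂ)) (congrFun (congrArg Prod.fst h0) j)
        simpa [hF, eval_real_smul, eval_rigid, mul_comm (y j)] using this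
      have hp : ∀ j, C (y j) * X j + C (t : ℂ) * f j = 0 := fun j =>
        MvPolynomial.funext fun z => by simpa using hz z j
      by_contra ht
      refine hf0 (funext fun j => MvPolynomial.ext _ _ fun m => ?_)
      by_contra hm
      have hm2 := two_le_degree_of_mem_gcSet hf hm
      have := congrArg (coeff m) (hp j)
      rw [coeff_add, coeff_C_mul, coeff_X, if_neg, mul_zero, zero_add, coeff_C_mul,
        coeff_zero] at this
      · exact mul_ne_zero (by exact_mod_cast ht) hm this
      · rintro rfl
        rw [Finsupp.degree_single] at hm2
        omega
    subst ht
    rw [zero_smul, add_zero] at h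
    have hu := diagParams_injective (paramField_injective hc hM (h.trans (map_zero _).symm) |>.trans
      (map_zero diagParams).symm)
    rw [hu]
    rfl
  · rintro ⟨u, t⟩
    obtain ⟨F, G, y, hFG, -⟩ := exists_hasParams_diagParams (c := c) hM u
    simp only [LinearMap.coprod_apply, LinearMap.comp_apply, LinearMap.toSpanSingleton_apply]
    exact add_mem hFG.mem_map (Submodule.smul_mem _ _
      (Submodule.mem_map_of_mem (Submodule.subset_span (isInfCR_rigid hf))))

/-! ### Exchanging the first two monomials -/

theorem Phi_comm (P Q R : MvPolynomial (Fin 3) ℂ) (z : Fin 3 → ℂ) : Phi P Q R z = Phi Q P R z := by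
  simp only [Phi]
  ring

theorem PhiD_comm (P Q R : MvPolynomial (Fin 3) ℂ) (j : Fin 3) (z : Fin 3 → ℂ) :
    PhiD P Q R j z = PhiD Q P R j z := by
  simp only [PhiD]
  ring

theorem gSet_comm (P Q R : MvPolynomial (Fin 3) ℂ) : gSet P Q R = gSet Q P R := by
  ext A
  simp only [gSet, Set.mem_ofPred_eq, IsInfCR, Phi_comm P Q R, PhiD_comm P Q R]

theorem edet_comm (a b g : Fin 3 → ℕ) : edet a b g = -edet b a g := by
  simp only [edet, Matrix.det_fin_three, Matrix.of_apply, Matrix.cons_val]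
  ring

theorem rank_span_gSet_le_of_degE_ne {cP cQ cR : ℂ} {a b g : Fin 3 → ℕ} (hP : cP ≠ 0) (hQ : cQ ≠ 0)
    (hR : cR ≠ 0) (hd : degE a + degE b = 2 * degE g) (h2 : 2 ≤ degE g) (hdet : edet a b g ≠ 0)
    (hne : degE a ≠ degE b) :
    Module.rank ℝ (Submodule.span ℝ (gSet (mon cP a) (mon cQ b) (mon cR g))) ≤ 13 := by
  rcases hne.lt_or_gt with hlt | hlt
  · exact rank_span_gSet_le (c := ![cP, cQ, cR]) (e := ![a, b, g])
      (fun i => by fin_cases i <;> assumption) (expMatrix_det_ne_zero hdet) hd h2 hlt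
  · rw [gSet_comm]
    rw [edet_comm, neg_ne_zero] at hdet
    exact rank_span_gSet_le (c := ![cQ, cP, cR]) (e := ![b, a, g])
      (fun i => by fin_cases i <;> assumption) (expMatrix_det_ne_zero hdet)
      ((add_comm _ _).trans hd) h2 hlt

/-! ### A model of maximal dimension -/

/-- The monomials `z₁`, `z₂²z₃`, `z₂z₃`. -/
abbrev maxModel : Fin 3 → MvPolynomial (Fin 3) ℂ :=
  monomials ![1, 1, 1] ![![1, 0, 0], ![0, 2, 1], ![0, 1, 1]]

theorem exists_hasParams_maxModel (v : Params) :
    ∃ (F : Fin 3 → MvPolynomial (Fin 4) ℂ) (G : MvPolynomial (Fin 4) ℂ),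
      HasParams maxModel F G v := by
  obtain ⟨Z, hZ⟩ : ∃ Z : Fin 3 → MvPolynomial (Fin 4) ℂ,
      ∀ z w j, eval (Fin.snoc z w : Fin 4 → ℂ) (Z j) = z j :=
    ⟨fun j => X j.castSucc, fun z w j => by rw [eval_X, Fin.snoc_castSucc]⟩
  obtain ⟨W, hW⟩ : ∃ W : MvPolynomial (Fin 4) ℂ,
      ∀ (z : Fin 3 → ℂ) w, eval (Fin.snoc z w : Fin 4 → ℂ) W = w :=
    ⟨X (Fin.last 3), fun z w => by rw [eval_X, Fin.snoc_last]⟩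
  refine ⟨![C (v.1 0) + C (v.1 1) * W + C (v.1 2) * Z 0 + C (I * v.2 4) * (Z 1 ^ 2 * Z 2) +
        C (v.1 3) * (Z 1 * Z 2) + C (v.2 0 : ℂ) * W * Z 0 +
        C (2 * I * (starRingEnd ℂ) (v.1 1)) * (Z 1 ^ 2 * Z 2) * Z 0,
      Z 1 * (C (linPart v 1 1 - linPart v 2 2) + C ((starRingEnd ℂ) (v.1 3)) * Z 1),
      Z 2 * (C (2 * linPart v 2 2 - linPart v 1 1) + C (v.2 0 : ℂ) * W -
        C (2 * (starRingEnd ℂ) (v.1 3)) * Z 1 +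
        C (2 * I * (starRingEnd ℂ) (v.1 1)) * (Z 1 ^ 2 * Z 2))],
    C (v.2 1 : ℂ) + C (v.2 2 : ℂ) * W + C (v.2 0 : ℂ) * W ^ 2 +
      (C (2 * I * (starRingEnd ℂ) (v.1 0)) + C (2 * I * (starRingEnd ℂ) (v.1 1)) * W) *
        (Z 1 ^ 2 * Z 2),
    hasParams_of_fieldValues_eq (fun z w i => ?_) fun z w => ?_⟩
  · fin_cases i <;>
      simp [pushField, paramField, monomials, mon, linPart, Fin.sum_univ_three, hZ, hW,
        pderiv_X, Pi.single_apply] <;> ring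
  · simp [paramField, monomials, mon, hZ, hW]
    exact Or.inl (by ring)

theorem edet_maxModel : edet ![1, 0, 0] ![0, 2, 1] ![0, 1, 1] ≠ 0 := by
  simp [edet, Matrix.det_fin_three]

theorem rank_span_gSet_maxModel :
    Module.rank ℝ (Submodule.span ℝ
      (gSet (mon 1 ![1, 0, 0]) (mon 1 ![0, 2, 1]) (mon 1 ![0, 1, 1]))) = 13 := by
  refine le_antisymm (rank_span_gSet_le_of_degE_ne one_ne_zero one_ne_zero one_ne_zero
    (by decide) (by decide) edet_maxModel (by decide)) ?_
  rw [← rank_params]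
  refine rank_le_rank_of_injective (fieldValues maxModel) (paramField maxModel)
    (paramField_injective (fun i => by fin_cases i <;> exact one_ne_zero)
      (expMatrix_det_ne_zero edet_maxModel)) fun v => ?_
  obtain ⟨F, G, h⟩ := exists_hasParams_maxModel v
  exact h.mem_map

theorem mem_gcSet_maxModel : ![mon I ![0, 2, 1], 0, 0] ∈
    gcSet (mon 1 ![1, 0, 0]) (mon 1 ![0, 2, 1]) (mon 1 ![0, 1, 1]) 4 := by
  refine ⟨fun j m hm => ?_, fun z => ?_⟩
  · fin_cases j
    · have hm' : m = Finsupp.equivFunOnFinite.symm ![0, 2, 1] := by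
        simpa [mon_eq_monomial, support_monomial] using hm
      rw [hm', Finsupp.sum_fintype _ _ fun _ => rfl, Fin.sum_univ_three]
      simp
    · simp at hm
    · simp at hm
  · have h : ∀ q : ℂ, (I * q * (starRingEnd ℂ) q).re = 0 := fun q => by
      rw [mul_assoc, mul_conj, I_mul_re, ofReal_im, neg_zero]
    rw [← h (z 1 ^ 2 * z 2)]
    congr 1
    simp [PhiD, mon, Fin.sum_univ_three, pderiv_X, Pi.single_apply]
    exact Or.inl (by ring)

theorem rank_span_gcSet_maxModel_pos :
    0 < Module.rank ℝ (Submodule.span ℝ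
      (gcSet (mon 1 ![1, 0, 0]) (mon 1 ![0, 2, 1]) (mon 1 ![0, 1, 1]) 4)) := by
  refine rank_pos_iff_exists_ne_zero.mpr ⟨⟨_, Submodule.subset_span mem_gcSet_maxModel⟩, fun h => ?_⟩
  have h0 := congrFun (congrArg Subtype.val h) 0
  refine eval_mon_ne_zero I_ne_zero ![0, 2, 1] (z := 1) (fun _ => one_ne_zero) ?_
  simpa using congrArg (eval 1) h0

/-! ### The main theorem -/

/-- For a holomorphically nondegenerate monomial model with
`deg R ≥ 2`: if `dim_ℝ g_c > 0` then `7 ≤ dim_ℝ g ≤ 13`; moreover some such model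
attains `dim_ℝ g_c > 0` and `dim_ℝ g = 13`. -/
theorem stmt16 :
    (∀ (cP cQ cR : ℂ) (a b g : Fin 3 → ℕ),
      cP ≠ 0 → cQ ≠ 0 → cR ≠ 0 →
      degE a + degE b = 2 * degE g → 2 ≤ degE g → edet a b g ≠ 0 →
      0 < Module.rank ℝ ↥(Submodule.span ℝ
          (gcSet (mon cP a) (mon cQ b) (mon cR g) (degE a + degE b))) →
      (7 ≤ Module.rank ℝ ↥(Submodule.span ℝ (gSet (mon cP a) (mon cQ b) (mon cR g))) ∧
        Module.rank ℝ ↥(Submodule.span ℝ (gSet (mon cP a) (mon cQ b) (mon cR g))) ≤ 13)) ∧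
    (∃ (cP cQ cR : ℂ) (a b g : Fin 3 → ℕ),
      cP ≠ 0 ∧ cQ ≠ 0 ∧ cR ≠ 0 ∧
      degE a + degE b = 2 * degE g ∧ 2 ≤ degE g ∧ edet a b g ≠ 0 ∧
      0 < Module.rank ℝ ↥(Submodule.span ℝ
          (gcSet (mon cP a) (mon cQ b) (mon cR g) (degE a + degE b))) ∧
      Module.rank ℝ ↥(Submodule.span ℝ (gSet (mon cP a) (mon cQ b) (mon cR g))) = 13) := by
  refine ⟨fun cP cQ cR a b g hP hQ hR hd h2 hdet hpos => ?_, ?_⟩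
  · obtain ⟨f, hf, hf0⟩ := exists_mem_ne_zero_of_rank_span_pos hpos
    have hc : ∀ i, ![cP, cQ, cR] i ≠ 0 := fun i => by fin_cases i <;> assumption
    have hM := expMatrix_det_ne_zero hdet
    exact ⟨seven_le_rank_span_gSet (c := ![cP, cQ, cR]) (e := ![a, b, g]) hc hM hf hf0,
      rank_span_gSet_le_of_degE_ne hP hQ hR hd h2 hdet
        (degE_ne_of_mem_gcSet (c := ![cP, cQ, cR]) (e := ![a, b, g]) hc hM hd h2 hf hf0)⟩
  · exact ⟨1, 1, 1, ![1, 0, 0], ![0, 2, 1], ![0, 1, 1], one_ne_zero, one_ne_zero, one_ne_zero,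
      by decide, by decide, edet_maxModel, rank_span_gcSet_maxModel_pos, rank_span_gSet_maxModel⟩
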